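/- arXiv:2502.03768 — 2 statements merged into one kernel-verified Lean document; each statement's English description precedes it below -/
import Mathlib

section
/- Let π ∈ S_n and let τ be any permutation of {1,…,n−1}. Consider the rational function of independent variables σ_1,…,σ_{n−1}, x_1,…,x_{n−2}, t_1,…,t_{n−1}: S(σ, x, t) := ∑_{w ∈ S_{n−1}} G^β_w(x_1,…,x_{n−2}; ⊖σ_1,…,⊖σ_{n−2}) · ∂̄^β_w G^β_π(σ_1,…,σ_{n−1}; ⊖t_1,…,⊖t_{n−1}), where ∂̄^β_w acts on the σ-variables. Then substituting σ_j := x_{τ(j)} for j = 1,…,n−1 (so that e_l(σ_1,…,σ_{n−1}) = e_l(x_1,…,x_{n−1}) for every l = 1,…,n−1) yields S = G^β_π(x_1,…,x_{n−1}; ⊖t_1,…,⊖t_{n−1}). -/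
noncomputable section
open scoped BigOperators

variable {F : Type*}

/-- `x ⊖ y := (x - y)/(1 + β·y)`. -/
def om [Field F] (β x y : F) : F := (x - y) / (1 + β * y)

/-- `⊖ t := -t/(1 + β·t)`. -/
def negOm [Field F] (β t : F) : F := (-t) / (1 + β * t)

/-- The R-matrix `R^{(n)}(x,y)` on `V ⊗ V`, `V = F^n`, with entries
`R_{ij,kl} = (1 + [k<l]·β(x⊖y)) δ_{il} δ_{jk} + [k>l]·(x⊖y) δ_{ik} δ_{jl}`;
the row index is the pair `(i,j)`, the column index is the pair `(k,l)`. -/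
def Rmat [Field F] (n : ℕ) (β x y : F) :
    Matrix (Fin n × Fin n) (Fin n × Fin n) F := Matrix.of fun p q =>
  (if p.1 = q.2 ∧ p.2 = q.1 then (if q.1 < q.2 then 1 + β * om β x y else 1) else 0) +
  (if p.1 = q.1 ∧ p.2 = q.2 ∧ q.2 < q.1 then om β x y else 0)

/-- The Coxeter length of a permutation: its number of inversions. -/
def permLength {N : ℕ} (w : Equiv.Perm (Fin N)) : ℕ :=
  (Finset.univ.filter fun p : Fin N × Fin N => p.1 < p.2 ∧ w p.2 < w p.1).card

/-- The longest permutation `ω_N : i ↦ N - 1 - i`. -/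
def omegaPerm (N : ℕ) : Equiv.Perm (Fin N) :=
  ⟨Fin.rev, Fin.rev, fun i => Fin.rev_rev i, fun i => Fin.rev_rev i⟩

/-- `IsGroth M β G` says that the family `G`, indexed by `S_{M+1}`, satisfies the
defining recursion of the double β-Grothendieck polynomials:
`G_{ω}(x;y) = ∏_{i+j ≤ M+1} (x_i + y_j + β x_i y_j)` (1-based indices), and
`G_{w s_i}(x;y) = ∂^β_i G_w(x;y)` whenever `ℓ(w s_i) = ℓ(w) - 1`
(the β-divided difference acting on the x-variables). -/
def IsGroth [Field F] (M : ℕ) (β : F)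
    (G : Equiv.Perm (Fin (M + 1)) → (Fin (M + 1) → F) → (Fin (M + 1) → F) → F) : Prop :=
  (∀ x y : Fin (M + 1) → F,
      G (omegaPerm (M + 1)) x y =
        ∏ p ∈ Finset.univ.filter
            (fun p : Fin (M + 1) × Fin (M + 1) => (p.1 : ℕ) + (p.2 : ℕ) + 2 ≤ M + 1),
          (x p.1 + y p.2 + β * x p.1 * y p.2)) ∧
  (∀ (w : Equiv.Perm (Fin (M + 1))) (i : Fin M) (x y : Fin (M + 1) → F),
      permLength (w * Equiv.swap i.castSucc i.succ) + 1 = permLength w →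
      x i.castSucc ≠ x i.succ →
      G (w * Equiv.swap i.castSucc i.succ) x y =
        ((1 + β * x i.succ) * G w x y -
            (1 + β * x i.castSucc) * G w (fun j => x (Equiv.swap i.castSucc i.succ j)) y) /
          (x i.castSucc - x i.succ))

/-- The operator `∂̄^β_i = ∂^β_i + β`, acting on functions of `M+1` variables
in the pair of variables with indices `i, i+1`. -/
def ddbar [Field F] {M : ℕ} (β : F) (i : Fin M) (f : (Fin (M + 1) → F) → F) :
    (Fin (M + 1) → F) → F := fun z =>
  ((1 + β * z i.succ) * f z -
      (1 + β * z i.castSucc) * f (fun j => z (Equiv.swap i.castSucc i.succ j))) /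
    (z i.castSucc - z i.succ) + β * f z

/-- `∂̄^β_{i_1} ∂̄^β_{i_2} ⋯ ∂̄^β_{i_ℓ}` for a word `L = [i_1, …, i_ℓ]`. -/
def ddbarWord [Field F] {M : ℕ} (β : F) (L : List (Fin M)) (f : (Fin (M + 1) → F) → F) :
    (Fin (M + 1) → F) → F :=
  L.foldr (ddbar β) f

/-- `L = [i_1, …, i_ℓ]` is a reduced word for `v`, i.e. `v = s_{i_1} ⋯ s_{i_ℓ}`
with `ℓ = ℓ(v)`. -/
def IsReducedWord {M : ℕ} (L : List (Fin M)) (v : Equiv.Perm (Fin (M + 1))) : Prop :=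
  (L.map fun i => Equiv.swap (Fin.castSucc i) (Fin.succ i)).prod = v ∧ L.length = permLength v

/-! The identity is Newton interpolation on the `S_N`-orbit of a point with distinct coordinates.
There the functions `G_w( · ; ⊖x)` and the functionals `f ↦ (∂̄_w f)(x)` are dual to each other:
`∂̄_i G_w` is `G_{w s_i} + β G_w` at a descent and `0` at an ascent, and `G_w(x; ⊖x) = δ_{w,1}`, so
peeling a reduced word from the right gives `(∂̄_w G_u)(x) = δ_{u,w}`. As there are as many
permutations as points of the orbit, every function `f` on it satisfies
`f = ∑_w (∂̄_w f)(x) G_w( · ; ⊖x)`. Finally `G_w` is a polynomial in `x` whose degree in `x_i` is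
at most `N - i`, so it does not involve the last variable. -/

section AdjacentTranspositions

variable {M : ℕ}

/-- The simple transposition `s_i` of `S_{M+1}`; an abbreviation, so that the library's
lemmas on `Equiv.swap` apply to it. -/
abbrev adjSwap (i : Fin M) : Equiv.Perm (Fin (M + 1)) := Equiv.swap i.castSucc i.succ

/-- `i` is a (right) descent of `w`. -/
def IsDescent (w : Equiv.Perm (Fin (M + 1))) (i : Fin M) : Prop := w i.succ < w i.castSucc

theorem isDescent_mul_adjSwap_iff {w : Equiv.Perm (Fin (M + 1))} {i : Fin M} :
    IsDescent (w * adjSwap i) i ↔ ¬ IsDescent w i := by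
  have hne : w i.castSucc ≠ w i.succ := w.injective.ne Fin.castSucc_lt_succ.ne
  simp only [IsDescent, Equiv.Perm.mul_apply, Equiv.swap_apply_left, Equiv.swap_apply_right,
    not_lt]
  exact hne.le_iff_lt.symm

theorem adjSwap_lt_adjSwap_iff {i : Fin M} {a b : Fin (M + 1)}
    (h : ¬ (a = i.castSucc ∧ b = i.succ)) (h' : ¬ (a = i.succ ∧ b = i.castSucc)) :
    adjSwap i a < adjSwap i b ↔ a < b := by
  rw [Equiv.swap_apply_def, Equiv.swap_apply_def]
  simp only [Fin.ext_iff, Fin.lt_def, Fin.val_castSucc, Fin.val_succ] at *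
  split_ifs <;> simp only [Fin.val_castSucc, Fin.val_succ] <;> omega

/-- The inversions of `w`, recorded by their values rather than their positions: passing from `w`
to `w s_i` then adds or removes a single pair. -/
def valueInversions {N : ℕ} (w : Equiv.Perm (Fin N)) : Finset (Fin N × Fin N) :=
  Finset.univ.filter fun p => p.1 < p.2 ∧ w⁻¹ p.2 < w⁻¹ p.1

theorem card_valueInversions {N : ℕ} (w : Equiv.Perm (Fin N)) :
    (valueInversions w).card = permLength w := by
  refine Finset.card_nbij' (fun p => (w⁻¹ p.2, w⁻¹ p.1)) (fun p => (w p.2, w p.1)) ?_ ?_ ?_ ?_ <;>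
    simp +contextual [valueInversions, Set.MapsTo, Set.LeftInvOn]

theorem valueInversions_one {N : ℕ} : valueInversions (1 : Equiv.Perm (Fin N)) = ∅ := by
  simp +contextual [valueInversions, Finset.filter_eq_empty_iff, le_of_lt]

theorem notMem_valueInversions_mul_adjSwap (w : Equiv.Perm (Fin (M + 1))) (i : Fin M) :
    (w i.succ, w i.castSucc) ∉ valueInversions (w * adjSwap i) := by
  simp [valueInversions, Fin.castSucc_lt_succ.le]

theorem IsDescent.valueInversions_eq_insert {w : Equiv.Perm (Fin (M + 1))} {i : Fin M}
    (h : IsDescent w i) :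
    valueInversions w =
      insert (w i.succ, w i.castSucc) (valueInversions (w * adjSwap i)) := by
  ext ⟨c, d⟩
  obtain ⟨a, rfl⟩ := w.surjective c
  obtain ⟨b, rfl⟩ := w.surjective d
  simp only [valueInversions, Finset.mem_filter, Finset.mem_univ, true_and, Finset.mem_insert,
    mul_inv_rev, Equiv.swap_inv, Equiv.Perm.mul_apply, Equiv.Perm.coe_inv,
    Equiv.symm_apply_apply, Prod.mk.injEq, w.injective.eq_iff]
  by_cases hba : b = i.castSucc ∧ a = i.succ
  · obtain ⟨rfl, rfl⟩ := hba
    simpa [IsDescent] using h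
  by_cases hab : b = i.succ ∧ a = i.castSucc
  · obtain ⟨rfl, rfl⟩ := hab
    have hnlt : ¬ w i.castSucc < w i.succ := not_lt_of_gt h
    simp [hnlt, Fin.castSucc_lt_succ.ne]
  · rw [adjSwap_lt_adjSwap_iff hba hab]
    tauto

theorem permLength_one {N : ℕ} : permLength (1 : Equiv.Perm (Fin N)) = 0 := by
  rw [← card_valueInversions, valueInversions_one, Finset.card_empty]

theorem IsDescent.permLength_mul_adjSwap {w : Equiv.Perm (Fin (M + 1))} {i : Fin M}
    (h : IsDescent w i) : permLength (w * adjSwap i) + 1 = permLength w := by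
  rw [← card_valueInversions, ← card_valueInversions, h.valueInversions_eq_insert,
    Finset.card_insert_of_notMem (notMem_valueInversions_mul_adjSwap w i)]

theorem permLength_mul_adjSwap_of_not_isDescent {w : Equiv.Perm (Fin (M + 1))} {i : Fin M}
    (h : ¬ IsDescent w i) : permLength (w * adjSwap i) = permLength w + 1 := by
  have := (isDescent_mul_adjSwap_iff.2 h).permLength_mul_adjSwap
  rwa [Equiv.mul_swap_mul_self, eq_comm] at this

theorem permLength_mul_adjSwap_le (w : Equiv.Perm (Fin (M + 1))) (i : Fin M) :
    permLength (w * adjSwap i) ≤ permLength w + 1 := by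
  by_cases h : IsDescent w i
  · have := h.permLength_mul_adjSwap
    omega
  · exact (permLength_mul_adjSwap_of_not_isDescent h).le

end AdjacentTranspositions

section LongestPermutation

variable {M : ℕ}

theorem omegaPerm_apply {N : ℕ} (i : Fin N) : omegaPerm N i = i.rev := rfl

theorem omegaPerm_inv {N : ℕ} : (omegaPerm N)⁻¹ = omegaPerm N := rfl

theorem perm_eq_one_of_forall_le {N : ℕ} {u : Equiv.Perm (Fin N)} (h : ∀ i, i ≤ u i) : u = 1 := by
  have hsum : ∑ i : Fin N, (i : ℕ) = ∑ i, (u i : ℕ) :=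
    (Equiv.sum_comp u fun i : Fin N => (i : ℕ)).symm
  have heq := (Finset.sum_eq_sum_iff_of_le fun i _ => Fin.le_def.1 (h i)).1 hsum
  ext i
  exact (heq i (Finset.mem_univ i)).symm

theorem eq_omegaPerm_of_forall_rev_le {N : ℕ} {u : Equiv.Perm (Fin N)} (h : ∀ i, i.rev ≤ u i) :
    u = omegaPerm N := by
  have hone : u * omegaPerm N = 1 := perm_eq_one_of_forall_le fun i => by
    simpa [omegaPerm_apply] using h i.rev
  rw [mul_eq_one_iff_eq_inv.1 hone, omegaPerm_inv]

theorem eq_omegaPerm_of_forall_isDescent {w : Equiv.Perm (Fin (M + 1))}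
    (h : ∀ i, IsDescent w i) : w = omegaPerm (M + 1) := by
  have hanti : StrictAnti w := Fin.strictAnti_iff_succ_lt.2 h
  refine eq_omegaPerm_of_forall_rev_le fun i => ?_
  simpa using (hanti.comp Fin.rev_strictAnti).le_apply (x := i.rev)

theorem perm_induction_from_omegaPerm {P : Equiv.Perm (Fin (M + 1)) → Prop}
    (omega : P (omegaPerm (M + 1)))
    (mul_adjSwap : ∀ w i, IsDescent w i → P w → P (w * adjSwap i))
    (w : Equiv.Perm (Fin (M + 1))) : P w := by
  induction hn : Fintype.card (Fin (M + 1) × Fin (M + 1)) - permLength w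
    using Nat.strong_induction_on generalizing w with
  | _ n ih =>
  by_cases hall : ∀ i, IsDescent w i
  · rwa [eq_omegaPerm_of_forall_isDescent hall]
  obtain ⟨i, hi⟩ := not_forall.1 hall
  have hlen := permLength_mul_adjSwap_of_not_isDescent hi
  have hbound : permLength (w * adjSwap i) ≤ Fintype.card (Fin (M + 1) × Fin (M + 1)) :=
    Finset.card_le_univ _
  have hP := mul_adjSwap _ i (isDescent_mul_adjSwap_iff.2 hi) (ih _ (by omega) _ rfl)
  rwa [Equiv.mul_swap_mul_self] at hP

end LongestPermutation

section ReducedWords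

variable {M : ℕ}

theorem permLength_prod_adjSwap_le (L : List (Fin M)) :
    permLength (L.map adjSwap).prod ≤ L.length := by
  induction L using List.reverseRecOn with
  | nil => simp [permLength_one]
  | append_singleton L i ih =>
    simp only [List.map_append, List.map_singleton, List.prod_append, List.prod_singleton,
      List.length_append, List.length_singleton]
    exact (permLength_mul_adjSwap_le _ i).trans (by omega)

theorem isReducedWord_append_singleton_iff {L : List (Fin M)} {i : Fin M}
    {w : Equiv.Perm (Fin (M + 1))} :
    IsReducedWord (L ++ [i]) w ↔ IsReducedWord L (w * adjSwap i) ∧ IsDescent w i := by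
  have hprod : (L.map adjSwap).prod * adjSwap i = w ↔ (L.map adjSwap).prod = w * adjSwap i := by
    rw [← eq_mul_inv_iff_mul_eq, Equiv.swap_inv]
  simp only [IsReducedWord, List.map_append, List.map_singleton, List.prod_append,
    List.prod_singleton, List.length_append, List.length_singleton, hprod]
  constructor
  · rintro ⟨hw, hlen⟩
    have hle := permLength_prod_adjSwap_le L
    rw [hw] at hle
    have hdesc : IsDescent w i := by
      by_contra h
      have := permLength_mul_adjSwap_of_not_isDescent h
      omega
    exact ⟨⟨hw, by have := hdesc.permLength_mul_adjSwap; omega⟩, hdesc⟩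
  · rintro ⟨⟨hw, hlen⟩, hdesc⟩
    exact ⟨hw, by rw [hlen, hdesc.permLength_mul_adjSwap]⟩

end ReducedWords

section DividedDifferencesOnOrbits

variable [Field F] {M : ℕ}

/-- The restriction of a function of `M + 1` variables to the orbit of the point `x`, which is
parametrised by the permutations of the coordinates. -/
def orbitRestrict (x : Fin (M + 1) → F) (f : (Fin (M + 1) → F) → F) :
    Equiv.Perm (Fin (M + 1)) → F :=
  fun u => f (x ∘ u)

/-- The operator `∂̄^β_i` on functions on the orbit of `x`, in the form
`(1 + β x_i) (f - s_i f) / (x_i - x_{i+1})`, which agrees with `∂^β_i + β` if the coordinates of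
`x` are distinct. -/
def orbitDdbar (β : F) (x : Fin (M + 1) → F) (i : Fin M) :
    Module.End F (Equiv.Perm (Fin (M + 1)) → F) where
  toFun φ u :=
    (1 + β * x (u i.castSucc)) * (φ u - φ (u * adjSwap i)) /
      (x (u i.castSucc) - x (u i.succ))
  map_add' φ ψ := by
    ext u
    simp only [Pi.add_apply]
    ring
  map_smul' c φ := by
    ext u
    simp only [Pi.smul_apply, smul_eq_mul, RingHom.id_apply]
    ring

variable {β : F} {x : Fin (M + 1) → F}

theorem orbitDdbar_apply (i : Fin M) (φ : Equiv.Perm (Fin (M + 1)) → F)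
    (u : Equiv.Perm (Fin (M + 1))) :
    orbitDdbar β x i φ u =
      (1 + β * x (u i.castSucc)) * (φ u - φ (u * adjSwap i)) /
        (x (u i.castSucc) - x (u i.succ)) :=
  rfl

theorem sub_comp_perm_ne_zero (hx : Function.Injective x) (u : Equiv.Perm (Fin (M + 1)))
    (i : Fin M) : x (u i.castSucc) - x (u i.succ) ≠ 0 :=
  sub_ne_zero.2 ((hx.comp u.injective).ne Fin.castSucc_lt_succ.ne)

theorem orbitDdbar_orbitDdbar (hx : Function.Injective x) (i : Fin M)
    (φ : Equiv.Perm (Fin (M + 1)) → F) :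
    orbitDdbar β x i (orbitDdbar β x i φ) = β • orbitDdbar β x i φ := by
  ext u
  have hsub := sub_comp_perm_ne_zero hx u i
  have hsub' : x (u i.succ) - x (u i.castSucc) ≠ 0 := by rwa [← neg_sub, neg_ne_zero]
  simp only [orbitDdbar_apply, Pi.smul_apply, smul_eq_mul, Equiv.mul_swap_mul_self,
    Equiv.Perm.mul_apply, Equiv.swap_apply_left, Equiv.swap_apply_right]
  field_simp
  ring

theorem orbitDdbar_orbitRestrict (hx : Function.Injective x) (i : Fin M)
    (f : (Fin (M + 1) → F) → F) :
    orbitDdbar β x i (orbitRestrict x f) = orbitRestrict x (ddbar β i f) := by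
  ext u
  have hsub := sub_comp_perm_ne_zero hx u i
  have hswap : (fun j => x (u (adjSwap i j))) = x ∘ ⇑(u * adjSwap i) := rfl
  simp only [orbitDdbar_apply, orbitRestrict, ddbar, Function.comp_apply, hswap]
  field_simp
  ring

theorem prod_orbitDdbar_orbitRestrict (hx : Function.Injective x) (L : List (Fin M))
    (f : (Fin (M + 1) → F) → F) :
    (L.map (orbitDdbar β x)).prod (orbitRestrict x f) = orbitRestrict x (ddbarWord β L f) := by
  induction L with
  | nil => rfl
  | cons i L ih =>
    rw [List.map_cons, List.prod_cons, Module.End.mul_apply, ih, orbitDdbar_orbitRestrict hx]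
    rfl

end DividedDifferencesOnOrbits

section DividedDifferencesOfPolynomials

open MvPolynomial

theorem X_sub_X_dvd_sub_rename_swap {R σ : Type*} [CommRing R] [DecidableEq σ] (a b : σ)
    (P : MvPolynomial σ R) : X a - X b ∣ P - rename (Equiv.swap a b) P := by
  induction P using MvPolynomial.induction_on with
  | C c => simp
  | add P Q hP hQ =>
    rw [map_add, add_sub_add_comm]
    exact dvd_add hP hQ
  | mul_X P l hP =>
    have hX : (X a - X b : MvPolynomial σ R) ∣ X l - X (Equiv.swap a b l) := by
      rw [Equiv.swap_apply_def]
      split_ifs with ha hb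
      · rw [ha]
      · rw [hb, dvd_sub_comm]
      · simp
    have hsplit : P * X l - rename (Equiv.swap a b) (P * X l) =
        (P - rename (Equiv.swap a b) P) * X l +
          rename (Equiv.swap a b) P * (X l - X (Equiv.swap a b l)) := by
      rw [map_mul, rename_X]
      ring
    rw [hsplit]
    exact dvd_add (hP.mul_right _) (hX.mul_left _)

theorem one_le_degreeOf_X_sub_X {R σ : Type*} [CommRing R] [Nontrivial R] {a b : σ}
    (hab : a ≠ b) : 1 ≤ degreeOf a (X a - X b : MvPolynomial σ R) := by
  have hX : degreeOf a (-X b : MvPolynomial σ R) < degreeOf a (X a : MvPolynomial σ R) := by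
    rw [degreeOf_neg, degreeOf_X_of_ne hab, degreeOf_X_self]
    exact one_pos
  rw [sub_eq_add_neg, degreeOf_add_eq_of_degreeOf_lt hX, degreeOf_X_self]

theorem degreeOf_add_degreeOf_le_of_mul_eq_sub_rename {R σ : Type*} [CommRing R] [IsDomain R]
    {D Q T : MvPolynomial σ R} {s : Equiv.Perm σ} (hD : D ≠ 0) (hQ : Q ≠ 0)
    (h : D * Q = T - rename s T) (l : σ) :
    degreeOf l D + degreeOf l Q ≤ max (degreeOf l T) (degreeOf (s⁻¹ l) T) := by
  have hrename : degreeOf l (rename s T) = degreeOf (s⁻¹ l) T := by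
    simpa using degreeOf_rename_of_injective (p := T) s.injective (s⁻¹ l)
  rw [← degreeOf_mul_eq hD hQ, h, ← hrename]
  exact degreeOf_sub_le l T _

theorem degreeOf_one_add_C_mul_X_mul_le {R σ : Type*} [CommSemiring R] [Nontrivial R]
    [DecidableEq σ] (β : R) (a l : σ) (P : MvPolynomial σ R) :
    degreeOf l ((1 + C β * X a) * P) ≤ (if l = a then 1 else 0) + degreeOf l P := by
  refine (degreeOf_mul_le l _ P).trans (Nat.add_le_add_right ?_ _)
  refine (degreeOf_add_le l _ _).trans ?_
  rw [degreeOf_one, ← degreeOf_X (R := R)]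
  exact max_le (Nat.zero_le _) (degreeOf_C_mul_le _ l β)

theorem degreeOf_X_add_C_add_le {R σ : Type*} [CommSemiring R] [Nontrivial R] [DecidableEq σ]
    (β c : R) (a l : σ) :
    degreeOf l (X a + C c + C β * X a * C c) ≤ if a = l then 1 else 0 := by
  have hX : degreeOf l (X a : MvPolynomial σ R) ≤ if a = l then 1 else 0 := by
    simp [degreeOf_X, eq_comm]
  have hmul : degreeOf l (C β * X a * C c) ≤ if a = l then 1 else 0 := by
    rw [mul_right_comm, ← C_mul]
    exact (degreeOf_C_mul_le _ l _).trans hX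
  refine (degreeOf_add_le l _ _).trans (max_le ((degreeOf_add_le l _ _).trans ?_) hmul)
  rw [degreeOf_C]
  exact max_le hX (Nat.zero_le _)

variable {R : Type*} [CommRing R] {M : ℕ}

/-- `P` lies in the span of the monomials `x_1^{a_1} ⋯ x_{M+1}^{a_{M+1}}` with
`a_i ≤ M + 1 - i` (`1`-based), the staircase exponents of the longest permutation of `S_{M+1}`. -/
def HasStaircaseDegree (P : MvPolynomial (Fin (M + 1)) R) : Prop :=
  ∀ i : Fin (M + 1), degreeOf i P + i ≤ M

theorem hasStaircaseDegree_prod_add_add_mul [Nontrivial R] (β : R) (y : Fin (M + 1) → R) :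
    HasStaircaseDegree (∏ p ∈ Finset.univ.filter
      (fun p : Fin (M + 1) × Fin (M + 1) => (p.1 : ℕ) + (p.2 : ℕ) + 2 ≤ M + 1),
        (X p.1 + C (y p.2) + C β * X p.1 * C (y p.2))) := by
  intro l
  refine Nat.add_le_of_le_sub (Nat.lt_succ_iff.1 l.isLt) ?_
  refine (degreeOf_prod_le l _ _).trans ?_
  refine (Finset.sum_le_sum fun p _ => degreeOf_X_add_C_add_le β (y p.2) p.1 l).trans ?_
  rw [← Finset.card_filter, Finset.filter_filter, ← Finset.card_range (M - l)]
  refine Finset.card_le_card_of_injOn (fun p => (p.2 : ℕ)) (fun p hp => ?_) ?_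
  · simp only [Finset.coe_filter, Finset.mem_univ, true_and, Set.mem_ofPred_eq] at hp
    obtain ⟨hp, rfl⟩ := hp
    simp only [Finset.coe_range, Set.mem_Iio]
    omega
  · rintro ⟨a, b⟩ hp ⟨a', b'⟩ hp' h
    simp_all [Fin.ext_iff]

-- The swap takes the degree in `X_{i+1}` at most one above the staircase bound, and dividing by
-- `X_i - X_{i+1}` lowers it by one again.
theorem HasStaircaseDegree.of_mul_eq_sub_rename [IsDomain R]
    {P Q T : MvPolynomial (Fin (M + 1)) R} {i : Fin M} (hP : HasStaircaseDegree P)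
    (hT : ∀ l, degreeOf l T ≤ (if l = i.succ then 1 else 0) + degreeOf l P)
    (hQ : (X i.castSucc - X i.succ) * Q = T - rename (adjSwap i) T) : HasStaircaseDegree Q := by
  intro l
  rcases eq_or_ne Q 0 with rfl | hQ0
  · simpa using Nat.lt_succ_iff.1 l.isLt
  have hne : i.castSucc ≠ i.succ := Fin.castSucc_lt_succ.ne
  have hsub : (X i.castSucc - X i.succ : MvPolynomial (Fin (M + 1)) R) ≠ 0 :=
    sub_ne_zero.2 ((X_injective (R := R)).ne hne)
  have hdeg := degreeOf_add_degreeOf_le_of_mul_eq_sub_rename hsub hQ0 hQ l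
  have hPi : degreeOf i.castSucc P + i ≤ M := hP i.castSucc
  have hPi' : degreeOf i.succ P + (i + 1) ≤ M := hP i.succ
  have hTi : degreeOf i.castSucc T ≤ degreeOf i.castSucc P := by simpa [hne] using hT i.castSucc
  have hTi' : degreeOf i.succ T ≤ 1 + degreeOf i.succ P := by simpa using hT i.succ
  rw [Equiv.swap_inv] at hdeg
  rcases eq_or_ne l i.castSucc with rfl | hl
  · have hone := one_le_degreeOf_X_sub_X (R := R) hne
    rw [Equiv.swap_apply_left] at hdeg
    rw [Fin.val_castSucc]
    omega
  rcases eq_or_ne l i.succ with rfl | hl'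
  · have hone := one_le_degreeOf_X_sub_X (R := R) hne.symm
    rw [← neg_sub, degreeOf_neg] at hone
    rw [Equiv.swap_apply_right] at hdeg
    rw [Fin.val_succ]
    omega
  · have hPl := hP l
    have hTl : degreeOf l T ≤ degreeOf l P := by simpa [hl'] using hT l
    rw [Equiv.swap_apply_of_ne_of_ne hl hl'] at hdeg
    omega

theorem HasStaircaseDegree.exists_dividedDifference [IsDomain R] {P : MvPolynomial (Fin (M + 1)) R}
    (hP : HasStaircaseDegree P) (β : R) (i : Fin M) :
    ∃ Q : MvPolynomial (Fin (M + 1)) R, HasStaircaseDegree Q ∧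
      (X i.castSucc - X i.succ) * Q =
        (1 + C β * X i.succ) * P - (1 + C β * X i.castSucc) * rename (adjSwap i) P := by
  obtain ⟨Q, hQ⟩ := X_sub_X_dvd_sub_rename_swap i.castSucc i.succ ((1 + C β * X i.succ) * P)
  refine ⟨Q, hP.of_mul_eq_sub_rename (degreeOf_one_add_C_mul_X_mul_le β i.succ · P) hQ.symm, ?_⟩
  simp [← hQ]

theorem HasStaircaseDegree.eval_eq_eval {P : MvPolynomial (Fin (M + 1)) R}
    (hP : HasStaircaseDegree P) {x x' : Fin (M + 1) → R}
    (h : ∀ i : Fin M, x i.castSucc = x' i.castSucc) : eval x P = eval x' P := by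
  refine eval₂Hom_congr' rfl (fun i hi _ => ?_) rfl
  induction i using Fin.lastCases with
  | last =>
    have hlast := hP (Fin.last M)
    rw [mem_vars_iff_degreeOf_ne_zero] at hi
    rw [Fin.val_last] at hlast
    omega
  | cast i => exact h i

end DividedDifferencesOfPolynomials

section AlgebraicIndependence

theorem one_add_mul_ne_zero_of_algebraicIndependent {ι R A : Type*} [CommRing R] [Nontrivial R]
    [CommRing A] [Algebra R A] {v : ι → A} (hv : AlgebraicIndependent R v) (i j : ι) :
    1 + v i * v j ≠ 0 := by
  intro h
  have hzero : (1 + MvPolynomial.X i * MvPolynomial.X j : MvPolynomial ι R) = 0 :=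
    algebraicIndependent_iff.1 hv _ (by simpa using h)
  simpa using congrArg (MvPolynomial.eval 0) hzero

end AlgebraicIndependence

section DualFamilies

theorem sum_dual_smul_eq_self {K V ι : Type*} [Field K] [AddCommGroup V] [Module K V]
    [FiniteDimensional K V] [Fintype ι] [DecidableEq ι] {e : ι → V} {ε : ι → Module.Dual K V}
    (hdual : ∀ i j, ε i (e j) = if j = i then 1 else 0)
    (hcard : Fintype.card ι = Module.finrank K V) (v : V) : ∑ i, ε i v • e i = v := by
  have hindep : LinearIndependent K e := by
    rw [Fintype.linearIndependent_iff]
    intro c hc i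
    simpa [hdual] using congrArg (ε i) hc
  have hspan := hindep.span_eq_top_of_card_eq_finrank' hcard
  have hid : ∑ i, (ε i).smulRight (e i) = LinearMap.id :=
    LinearMap.ext_on_range hspan fun j => by simp [LinearMap.sum_apply, hdual]
  simpa [LinearMap.sum_apply] using LinearMap.congr_fun hid v

end DualFamilies

section GrothendieckPolynomials

variable [Field F] {M : ℕ} {β : F}
  {G : Equiv.Perm (Fin (M + 1)) → (Fin (M + 1) → F) → (Fin (M + 1) → F) → F}

theorem IsGroth.apply_mul_adjSwap (hG : IsGroth M β G) {w : Equiv.Perm (Fin (M + 1))} {i : Fin M}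
    (hw : IsDescent w i) {x : Fin (M + 1) → F} (hx : Function.Injective x)
    (y : Fin (M + 1) → F) :
    G (w * adjSwap i) x y =
      ((1 + β * x i.succ) * G w x y - (1 + β * x i.castSucc) * G w (x ∘ adjSwap i) y) /
        (x i.castSucc - x i.succ) :=
  hG.2 w i x y hw.permLength_mul_adjSwap (hx.ne Fin.castSucc_lt_succ.ne)

theorem IsGroth.congr_y (hG : IsGroth M β G) (w : Equiv.Perm (Fin (M + 1)))
    {x : Fin (M + 1) → F} (hx : Function.Injective x) {y y' : Fin (M + 1) → F}
    (hy : ∀ i : Fin M, y i.castSucc = y' i.castSucc) : G w x y = G w x y' := by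
  induction w using perm_induction_from_omegaPerm generalizing x with
  | omega =>
    rw [hG.1, hG.1]
    refine Finset.prod_congr rfl fun p hp => ?_
    rw [Finset.mem_filter] at hp
    rw [show y p.2 = y' p.2 from hy ⟨p.2, by omega⟩]
  | mul_adjSwap w i hw ih =>
    rw [hG.apply_mul_adjSwap hw hx, hG.apply_mul_adjSwap hw hx, ih hx,
      ih (hx.comp (adjSwap i).injective)]

section StaircasePolynomial

open MvPolynomial

theorem IsGroth.exists_hasStaircaseDegree (hG : IsGroth M β G) (w : Equiv.Perm (Fin (M + 1)))
    (y : Fin (M + 1) → F) :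
    ∃ P : MvPolynomial (Fin (M + 1)) F, HasStaircaseDegree P ∧
      ∀ x : Fin (M + 1) → F, Function.Injective x → G w x y = eval x P := by
  induction w using perm_induction_from_omegaPerm with
  | omega => exact ⟨_, hasStaircaseDegree_prod_add_add_mul β y, fun x _ => by simp [hG.1]⟩
  | mul_adjSwap w i hw ih =>
    obtain ⟨P, hPdeg, hP⟩ := ih
    obtain ⟨Q, hQdeg, hQ⟩ := hPdeg.exists_dividedDifference β i
    refine ⟨Q, hQdeg, fun x hx => ?_⟩
    have hsub : x i.castSucc - x i.succ ≠ 0 := sub_ne_zero.2 (hx.ne Fin.castSucc_lt_succ.ne)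
    rw [hG.apply_mul_adjSwap hw hx, hP x hx, hP _ (hx.comp (adjSwap i).injective),
      div_eq_iff hsub]
    simpa [eval_rename, mul_comm] using (congrArg (eval x) hQ).symm

end StaircasePolynomial

theorem IsGroth.congr_x (hG : IsGroth M β G) (w : Equiv.Perm (Fin (M + 1)))
    {x x' : Fin (M + 1) → F} (hx : Function.Injective x) (hx' : Function.Injective x')
    (h : ∀ i : Fin M, x i.castSucc = x' i.castSucc) (y : Fin (M + 1) → F) :
    G w x y = G w x' y := by
  obtain ⟨P, hPdeg, hP⟩ := hG.exists_hasStaircaseDegree w y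
  rw [hP x hx, hP x' hx', hPdeg.eval_eq_eval h]

end GrothendieckPolynomials

section Localization

variable [Field F] {M : ℕ} {β : F}
  {G : Equiv.Perm (Fin (M + 1)) → (Fin (M + 1) → F) → (Fin (M + 1) → F) → F}
  {x : Fin (M + 1) → F}

theorem add_negOm_add_mul_negOm {a b : F} (hb : 1 + β * b ≠ 0) :
    a + negOm β b + β * a * negOm β b = om β a b := by
  simp only [negOm, om]
  rw [eq_div_iff hb]
  linear_combination (1 + β * a) * div_mul_cancel₀ (-b) hb

theorem IsGroth.apply_comp_eq_zero (hG : IsGroth M β G) (hx : Function.Injective x)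
    (hβ : ∀ i, 1 + β * x i ≠ 0) (w : Equiv.Perm (Fin (M + 1))) {u : Equiv.Perm (Fin (M + 1))}
    (hne : u ≠ w) (hlen : permLength u ≤ permLength w) : G w (x ∘ u) (negOm β ∘ x) = 0 := by
  induction w using perm_induction_from_omegaPerm generalizing u with
  | omega =>
    obtain ⟨i, hi⟩ : ∃ i, u i < i.rev := by
      by_contra! h
      exact hne (eq_omegaPerm_of_forall_rev_le h)
    rw [Fin.lt_def, Fin.val_rev] at hi
    rw [hG.1]
    refine Finset.prod_eq_zero (i := (i, u i)) (by simp; omega) ?_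
    simp only [Function.comp_apply]
    rw [add_negOm_add_mul_negOm (hβ _), om, sub_self, zero_div]
  | mul_adjSwap w i hw ih =>
    have hlen_w := hw.permLength_mul_adjSwap
    have hlen_u := permLength_mul_adjSwap_le u i
    have hu : G w (x ∘ u) (negOm β ∘ x) = 0 := ih (by rintro rfl; omega) (by omega)
    have hus : G w (x ∘ ⇑(u * adjSwap i)) (negOm β ∘ x) = 0 :=
      ih (by rintro rfl; simp at hne) (by omega)
    rw [hG.apply_mul_adjSwap hw (hx.comp u.injective), Function.comp_assoc, ← Equiv.Perm.coe_mul,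
      hu, hus, mul_zero, mul_zero, sub_zero, zero_div]

theorem IsGroth.omegaPerm_apply_comp_omegaPerm (hG : IsGroth M β G)
    (hβ : ∀ i, 1 + β * x i ≠ 0) :
    G (omegaPerm (M + 1)) (x ∘ omegaPerm (M + 1)) (negOm β ∘ x) =
      ∏ p ∈ valueInversions (omegaPerm (M + 1)), om β (x p.2) (x p.1) := by
  rw [hG.1]
  refine Finset.prod_nbij' (fun p => (p.2, p.1.rev)) (fun p => (p.2.rev, p.1))
    (fun p hp => ?_) (fun p hp => ?_) (by simp) (by simp)
    (fun p _ => add_negOm_add_mul_negOm (hβ p.2))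
  all_goals
    simp only [Finset.mem_filter, Finset.mem_univ, true_and, valueInversions, omegaPerm_inv,
      omegaPerm_apply, Fin.lt_def, Fin.val_rev] at hp ⊢
    omega

theorem IsGroth.apply_comp_self (hG : IsGroth M β G) (hx : Function.Injective x)
    (hβ : ∀ i, 1 + β * x i ≠ 0) (w : Equiv.Perm (Fin (M + 1))) :
    G w (x ∘ w) (negOm β ∘ x) = ∏ p ∈ valueInversions w, om β (x p.2) (x p.1) := by
  induction w using perm_induction_from_omegaPerm with
  | omega => exact hG.omegaPerm_apply_comp_omegaPerm hβ
  | mul_adjSwap w i hw ih =>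
    have hlen := hw.permLength_mul_adjSwap
    have hzero : G w (x ∘ ⇑(w * adjSwap i)) (negOm β ∘ x) = 0 :=
      hG.apply_comp_eq_zero hx hβ w (by simp [Fin.castSucc_lt_succ.ne]) (by omega)
    have hsub := sub_comp_perm_ne_zero hx w i
    have hsub' : x (w i.succ) - x (w i.castSucc) ≠ 0 := by rwa [← neg_sub, neg_ne_zero]
    have hβ' := hβ (w i.succ)
    rw [hG.apply_mul_adjSwap hw (hx.comp (w * adjSwap i).injective), Function.comp_assoc,
      ← Equiv.Perm.coe_mul, Equiv.mul_swap_mul_self, hzero, ih, hw.valueInversions_eq_insert,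
      Finset.prod_insert (notMem_valueInversions_mul_adjSwap w i)]
    simp only [Function.comp_apply, Equiv.Perm.mul_apply, Equiv.swap_apply_left,
      Equiv.swap_apply_right, om]
    field_simp
    ring

theorem IsGroth.apply_self (hG : IsGroth M β G) (hx : Function.Injective x)
    (hβ : ∀ i, 1 + β * x i ≠ 0) (w : Equiv.Perm (Fin (M + 1))) :
    G w x (negOm β ∘ x) = if w = 1 then 1 else 0 := by
  split_ifs with hw
  · simpa [hw, valueInversions_one] using hG.apply_comp_self hx hβ 1
  · exact hG.apply_comp_eq_zero hx hβ w (u := 1) (Ne.symm hw) (by simp [permLength_one])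

end Localization

section NewtonInterpolation

variable [Field F] {M : ℕ} {β : F}
  {G : Equiv.Perm (Fin (M + 1)) → (Fin (M + 1) → F) → (Fin (M + 1) → F) → F}
  {x : Fin (M + 1) → F}

theorem IsGroth.orbitDdbar_of_isDescent (hG : IsGroth M β G) (hx : Function.Injective x)
    (y : Fin (M + 1) → F) {w : Equiv.Perm (Fin (M + 1))} {i : Fin M} (hw : IsDescent w i) :
    orbitDdbar β x i (orbitRestrict x fun z => G w z y) =
      orbitRestrict x (fun z => G (w * adjSwap i) z y) +
        β • orbitRestrict x fun z => G w z y := by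
  rw [orbitDdbar_orbitRestrict hx]
  ext u
  simp only [orbitRestrict, Pi.add_apply, Pi.smul_apply, smul_eq_mul,
    hG.apply_mul_adjSwap hw (hx.comp u.injective)]
  rfl

theorem IsGroth.orbitDdbar_of_not_isDescent (hG : IsGroth M β G) (hx : Function.Injective x)
    (y : Fin (M + 1) → F) {w : Equiv.Perm (Fin (M + 1))} {i : Fin M} (hw : ¬ IsDescent w i) :
    orbitDdbar β x i (orbitRestrict x fun z => G w z y) = 0 := by
  have hdesc := hG.orbitDdbar_of_isDescent hx y (isDescent_mul_adjSwap_iff.2 hw)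
  rw [Equiv.mul_swap_mul_self] at hdesc
  rw [eq_sub_of_add_eq hdesc.symm, map_sub, map_smul, orbitDdbar_orbitDdbar hx, sub_self]

theorem IsGroth.prod_orbitDdbar_apply_one (hG : IsGroth M β G) (hx : Function.Injective x)
    (hβ : ∀ i, 1 + β * x i ≠ 0) {L : List (Fin M)} {w : Equiv.Perm (Fin (M + 1))}
    (hL : IsReducedWord L w) (u : Equiv.Perm (Fin (M + 1))) :
    (L.map (orbitDdbar β x)).prod (orbitRestrict x fun z => G u z (negOm β ∘ x)) 1 =
      if u = w then 1 else 0 := by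
  induction L using List.reverseRecOn generalizing w u with
  | nil =>
    obtain rfl : 1 = w := hL.1
    exact hG.apply_self hx hβ u
  | append_singleton L i ih =>
    obtain ⟨hL', hw⟩ := isReducedWord_append_singleton_iff.1 hL
    have hws : ¬ IsDescent (w * adjSwap i) i := fun h => isDescent_mul_adjSwap_iff.1 h hw
    rw [List.map_append, List.prod_append, List.map_singleton, List.prod_singleton,
      Module.End.mul_apply]
    by_cases hu : IsDescent u i
    · have hne : u ≠ w * adjSwap i := by rintro rfl; exact hws hu
      rw [hG.orbitDdbar_of_isDescent hx _ hu, map_add, map_smul, Pi.add_apply, Pi.smul_apply,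
        ih hL', ih hL', if_neg hne, smul_zero, add_zero]
      simp only [mul_left_inj]
    · have hne : u ≠ w := by rintro rfl; exact hu hw
      rw [hG.orbitDdbar_of_not_isDescent hx _ hu, map_zero, Pi.zero_apply, if_neg hne]

theorem IsGroth.newton_interpolation (hG : IsGroth M β G) (hx : Function.Injective x)
    (hβ : ∀ i, 1 + β * x i ≠ 0) (f : (Fin (M + 1) → F) → F)
    {L : Equiv.Perm (Fin (M + 1)) → List (Fin M)} (hL : ∀ w, IsReducedWord (L w) w)
    (u : Equiv.Perm (Fin (M + 1))) :
    ∑ w, G w (x ∘ u) (negOm β ∘ x) * ddbarWord β (L w) f x = f (x ∘ u) := by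
  have hsum := sum_dual_smul_eq_self
    (e := fun w => orbitRestrict x fun z => G w z (negOm β ∘ x))
    (ε := fun w => LinearMap.proj 1 ∘ₗ ((L w).map (orbitDdbar β x)).prod)
    (fun w v => hG.prod_orbitDdbar_apply_one hx hβ (hL w) v) (by simp) (orbitRestrict x f)
  simpa [prod_orbitDdbar_orbitRestrict hx, orbitRestrict, mul_comm] using congrFun hsum u

theorem groth_reduction_general (hG : IsGroth M β G) (hx : Function.Injective x)
    (hβ : ∀ i, 1 + β * x i ≠ 0) (hx0 : ∀ i : Fin M, x i.castSucc ≠ 0)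
    (τ : Equiv.Perm (Fin (M + 1))) (f : (Fin (M + 1) → F) → F)
    {L : Equiv.Perm (Fin (M + 1)) → List (Fin M)} (hL : ∀ w, IsReducedWord (L w) w) :
    ∑ w, G w (Fin.snoc (fun i : Fin M => x i.castSucc) 0)
        (Fin.snoc (fun i : Fin M => negOm β (x (τ i.castSucc))) 0) *
          ddbarWord β (L w) f (fun j => x (τ j)) = f x := by
  have hsnoc : Function.Injective (Fin.snoc (fun i : Fin M => x i.castSucc) 0 : Fin (M + 1) → F) :=
    Fin.snoc_injective_of_injective (hx.comp (Fin.castSucc_injective M)) (by simpa using hx0)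
  have hcancel : (x ∘ τ) ∘ ⇑τ⁻¹ = x := by ext; simp
  have hnewton := hG.newton_interpolation (hx.comp τ.injective) (fun i => hβ (τ i)) f hL τ⁻¹
  rw [hcancel] at hnewton
  rw [← hnewton]
  refine Finset.sum_congr rfl fun w _ => congrArg (· * _) ?_
  rw [hG.congr_x w hsnoc hx (by simp)]
  exact hG.congr_y w hx (by simp)

end NewtonInterpolation

/-- **Lemma `l7`**: with `n = M+2`, `π ∈ S_n`, `τ` a permutation of `{1,…,n-1}`,
consider `S(σ,x,t) = ∑_{w ∈ S_{n-1}} G^β_w(x_1,…,x_{n-2}; ⊖σ_1,…,⊖σ_{n-2}) ·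
∂̄^β_w G^β_π(σ_1,…,σ_{n-1}; ⊖t_1,…,⊖t_{n-1})` (the operator `∂̄^β_w`, given by any
reduced word of `w`, acting on the `σ`-variables).  Substituting `σ_j := x_{τ(j)}`
yields `S = G^β_π(x_1,…,x_{n-1}; ⊖t_1,…,⊖t_{n-1})`. -/
theorem groth_reduction [Field F] [CharZero F] (M : ℕ) (β : F)
    (x t : Fin (M + 1) → F)
    (hind : AlgebraicIndependent ℚ
      (Sum.elim (fun _ : Unit => β) (Sum.elim x t)))
    (π : Equiv.Perm (Fin (M + 2))) (τ : Equiv.Perm (Fin (M + 1)))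
    (G1 : Equiv.Perm (Fin (M + 2)) → (Fin (M + 2) → F) → (Fin (M + 2) → F) → F)
    (hG1 : IsGroth (M + 1) β G1)
    (G2 : Equiv.Perm (Fin (M + 1)) → (Fin (M + 1) → F) → (Fin (M + 1) → F) → F)
    (hG2 : IsGroth M β G2)
    (L : Equiv.Perm (Fin (M + 1)) → List (Fin M))
    (hL : ∀ w, IsReducedWord (L w) w) :
    ∑ w : Equiv.Perm (Fin (M + 1)),
        G2 w (Fin.snoc (fun i : Fin M => x i.castSucc) 0)
            (Fin.snoc (fun i : Fin M => negOm β (x (τ i.castSucc))) 0) *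
          ddbarWord β (L w)
            (fun σ' => G1 π (Fin.snoc σ' 0)
              (Fin.snoc (fun i : Fin (M + 1) => negOm β (t i)) 0))
            (fun j => x (τ j)) =
      G1 π (Fin.snoc x 0) (Fin.snoc (fun i : Fin (M + 1) => negOm β (t i)) 0) := by
  have hx : AlgebraicIndependent ℚ x := hind.comp (Sum.inr ∘ Sum.inl)
    (Sum.inr_injective.comp Sum.inl_injective)
  exact groth_reduction_general hG2 hx.injective
    (fun i => one_add_mul_ne_zero_of_algebraicIndependent hind (Sum.inl ()) (Sum.inr (Sum.inl i)))
    (fun i => hx.ne_zero i.castSucc) τ _ hL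
end
end

section
/- (Complete flag case.) Suppose that for each i = 1,…,N−1 the tuple (σ^(i)_1,…,σ^(i)_{N−i}) is a permutation of (x_1,…,x_{N−i}) — equivalently e_l(σ^(i)_1,…,σ^(i)_{N−i}) = e_l(x_1,…,x_{N−i}) for all l = 1,…,N−i. Then the nested Bethe ansatz state satisfies |ψ^(0)⟩ = ∑_{w ∈ S_N} G^β_w(x_1,…,x_{N−1}; ⊖t_1,…,⊖t_{N−1}) |ω_N w^{−1}⟩, where ω_N ∈ S_N is the longest permutation. -/
noncomputable section
open scoped BigOperators

variable {F : Type*}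

/-- `R_{a i}(u, τ)` : the R-matrix acting on the auxiliary space (first factor)
and the `i`-th site of `H = (F^n)^{⊗N}`, identity elsewhere. -/
def Rsite [Field F] (n N : ℕ) (β u τ : F) (i : Fin N) :
    Matrix (Fin n × (Fin N → Fin n)) (Fin n × (Fin N → Fin n)) F := Matrix.of fun p q =>
  Rmat n β u τ (p.1, p.2 i) (q.1, q.2 i) *
    (if ∀ j, j ≠ i → p.2 j = q.2 j then 1 else 0)

/-- The monodromy matrix `T_a(u) = R_{aN}(u,t_N) ⋯ R_{a1}(u,t_1)` on `V_a ⊗ H`. -/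
def Tmono [Field F] (n N : ℕ) (β u : F) (t : Fin N → F) :
    Matrix (Fin n × (Fin N → Fin n)) (Fin n × (Fin N → Fin n)) F :=
  ((List.ofFn fun i : Fin N => Rsite n N β u (t i) i).reverse).prod

/-- The block `T_a(u)_{r c}` (with respect to the auxiliary space) as an operator on `H`. -/
def blockOp [Field F] (n N : ℕ) (β u : F) (t : Fin N → F) (r c : Fin n) :
    Matrix (Fin N → Fin n) (Fin N → Fin n) F :=
  Matrix.of fun s s' => Tmono n N β u t (r, s) (c, s')

/-- The natural basis vector `|n_1,…,n_N⟩` of `H` (also used as a dual basis covector). -/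
def ket [Field F] (n N : ℕ) (g : Fin N → Fin n) : (Fin N → Fin n) → F :=
  fun s => if s = g then 1 else 0

/-- The nested Bethe ansatz states.  `psi β k σ j m` is the Bethe state of the
level-`m` system, a `GL(j+2)` model on `k m` sites with equivariant parameters
`σ m` and spectral parameters `σ (m+1)`.  The base case (`j = 0`) is the `GL(2)`
state `B_1(σ^{(m+1)}_1) ⋯ B_1(σ^{(m+1)}_{k(m+1)}) |Ω⟩`, and the recursion step is
`|ψ^{(m)}⟩ = ∑_i ⟨i|ψ^{(m+1)}⟩ · B_{i_1}(σ^{(m+1)}_1) ⋯ B_{i_{k(m+1)}}(σ^{(m+1)}_{k(m+1)}) |Ω⟩`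
(the basis label `i_s ∈ {0,…,j}` of the level-`(m+1)` space corresponding to the
operator `B_{i_s+1}` of the level-`m` system). -/
def psi [Field F] (β : F) (k : ℕ → ℕ) (σ : (l : ℕ) → Fin (k l) → F) :
    (j m : ℕ) → (Fin (k m) → Fin (j + 2)) → F
  | 0, m =>
      Matrix.mulVec
        ((List.ofFn fun a : Fin (k (m + 1)) =>
            blockOp 2 (k m) β (σ (m + 1) a) (σ m) 0 1).prod)
        (ket 2 (k m) fun _ => 0)
  | j + 1, m => fun s =>
      ∑ i : Fin (k (m + 1)) → Fin (j + 2),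
        psi β k σ j (m + 1) i *
          Matrix.mulVec
            ((List.ofFn fun a : Fin (k (m + 1)) =>
                blockOp (j + 3) (k m) β (σ (m + 1) a) (σ m) 0 ((i a).succ)).prod)
            (ket (j + 3) (k m) fun _ => 0) s

/-!
The Yang–Baxter equation gives two exchange relations for a nesting step: permuting the parameters
of the sites, or those of the auxiliary lines, amounts to applying `Ř`-operators to the outcome or
to the inner state. The state `flagState β u t` is one nesting step applied to the reference vector
`|ω⟩`. If the site parameters are `x_1, …, x_{K+1}` and the spectral parameters `x_1, …, x_K`, an
induction on length shows that it is again a reference vector; by the exchange relations, nesting on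
permuted parameters therefore collapses level by level, and `|ψ^(0)⟩ = flagState β x t`. The
exchange relation for the sites says that the components of this vector satisfy the divided
difference recursion of Grothendieck polynomials in the second set of variables, and its component
at the identity is the product defining the top Grothendieck polynomial.
-/

namespace NestedBethe

section OrderedProducts

variable {A : Type*} [Monoid A]

theorem semiconjBy_prod_ofFn {X : A} {n : ℕ} {f g : Fin n → A}
    (h : ∀ i, SemiconjBy X (f i) (g i)) :
    SemiconjBy X (List.ofFn f).prod (List.ofFn g).prod := by
  induction n with
  | zero => simp
  | succ n ih =>
    rw [List.ofFn_succ, List.ofFn_succ, List.prod_cons, List.prod_cons]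
    exact (h 0).mul_right (ih fun i => h i.succ)

theorem semiconjBy_prod_ofFn_of_adjacent {X : A} {n : ℕ} {f g : Fin (n + 1) → A} (j : Fin n)
    (hpair : SemiconjBy X (f j.castSucc * f j.succ) (g j.castSucc * g j.succ))
    (hrest : ∀ i, i ≠ j.castSucc → i ≠ j.succ → SemiconjBy X (f i) (g i)) :
    SemiconjBy X (List.ofFn f).prod (List.ofFn g).prod := by
  induction n with
  | zero => exact j.elim0
  | succ n ih =>
    rw [List.ofFn_succ (f := f), List.ofFn_succ (f := g), List.prod_cons, List.prod_cons]
    cases j using Fin.cases with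
    | zero =>
      rw [List.ofFn_succ, List.ofFn_succ, List.prod_cons, List.prod_cons, ← mul_assoc, ← mul_assoc]
      refine hpair.mul_right (semiconjBy_prod_ofFn fun i => hrest _ ?_ ?_) <;> simp [Fin.ext_iff]
    | succ j =>
      refine (hrest 0 ?_ ?_).mul_right (ih j hpair fun i hi hi' => hrest _ ?_ ?_) <;>
        simp_all [Fin.ext_iff]

theorem prod_ofFn_mul_prod_ofFn {n : ℕ} {f g : Fin n → A}
    (h : ∀ i j, i < j → Commute (g i) (f j)) :
    (List.ofFn f).prod * (List.ofFn g).prod = (List.ofFn fun i => f i * g i).prod := by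
  induction n with
  | zero => simp
  | succ n ih =>
    have hcomm : Commute (g 0) (List.ofFn fun i : Fin n => f i.succ).prod :=
      semiconjBy_prod_ofFn fun i => h 0 i.succ i.succ_pos
    simp only [List.ofFn_succ, List.prod_cons]
    rw [← ih fun i j hij => h _ _ (Fin.succ_lt_succ_iff.2 hij), hcomm.symm.mul_mul_mul_comm]

end OrderedProducts

section ROperators

variable {I C : Type*} [CommRing F]

/-- The operator on functions of colourings `I → C` of a set of lines `I` that permutes the lines
by `e`. -/
def permOp (e : Equiv.Perm I) : Module.End F ((I → C) → F) :=
  LinearMap.funLeft F F (· ∘ e)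

theorem permOp_apply (e : Equiv.Perm I) (φ : (I → C) → F) (c : I → C) :
    permOp e φ c = φ (c ∘ e) := rfl

theorem comp_perm_comp_swap [DecidableEq I] (c : I → C) (e : Equiv.Perm I) (i j : I) :
    (c ∘ e) ∘ Equiv.swap i j = (c ∘ Equiv.swap (e i) (e j)) ∘ e := by
  simp only [Function.comp_assoc, ← Equiv.Perm.coe_mul, Equiv.mul_swap_eq_swap_mul]

theorem comp_swap_comp_swap_comm [DecidableEq I] (c : I → C) {i j k l : I} (hik : i ≠ k)
    (hil : i ≠ l) (hjk : j ≠ k) (hjl : j ≠ l) :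
    (c ∘ Equiv.swap i j) ∘ Equiv.swap k l = (c ∘ Equiv.swap k l) ∘ Equiv.swap i j := by
  rw [comp_perm_comp_swap, Equiv.swap_apply_of_ne_of_ne hik.symm hjk.symm,
    Equiv.swap_apply_of_ne_of_ne hil.symm hjl.symm]

theorem comp_swap_of_eq [DecidableEq I] {c : I → C} {i j : I} (h : c i = c j) :
    c ∘ Equiv.swap i j = c := by
  funext l
  simp only [Function.comp_apply, Equiv.swap_apply_def]
  split_ifs <;> simp_all

theorem comp_swap_comp_swap_self [DecidableEq I] (c : I → C) (i j : I) :
    (c ∘ Equiv.swap i j) ∘ Equiv.swap i j = c := by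
  funext l
  simp

theorem extend_comp_swap [DecidableEq I] {J : Type*} [DecidableEq J] {v : J → I}
    (hv : Function.Injective v) (d : J → C) (c : I → C) (a b : J) :
    Function.extend v d c ∘ Equiv.swap (v a) (v b) = Function.extend v (d ∘ Equiv.swap a b) c := by
  funext l
  by_cases hl : ∃ m, v m = l
  · obtain ⟨m, rfl⟩ := hl
    simp only [Function.comp_apply, ← hv.map_swap, hv.extend_apply]
  · have hne (m : J) : l ≠ v m := fun h => hl ⟨m, h.symm⟩
    simp only [Function.comp_apply, Equiv.swap_apply_of_ne_of_ne (hne a) (hne b),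
      Function.extend_apply' _ _ _ hl]

variable [DecidableEq I] [LinearOrder C]

/-- The R-matrix with spectral difference `z` on the lines `i` and `j`, acting on functions of
colourings. It is the matrix `Rmat` applied in the row index, so the colouring `c` below plays
the part of the row. -/
def rOp (β z : F) (i j : I) : Module.End F ((I → C) → F) where
  toFun φ c := if c j < c i then (1 + β * z) * φ (c ∘ Equiv.swap i j) + z * φ c
    else φ (c ∘ Equiv.swap i j)
  map_add' φ ψ := by
    funext c
    simp only [Pi.add_apply]
    split_ifs <;> ring
  map_smul' a φ := by
    funext c
    simp only [Pi.smul_apply, smul_eq_mul, RingHom.id_apply]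
    split_ifs <;> ring

theorem rOp_apply (β z : F) (i j : I) (φ : (I → C) → F) (c : I → C) :
    rOp β z i j φ c = if c j < c i then (1 + β * z) * φ (c ∘ Equiv.swap i j) + z * φ c
      else φ (c ∘ Equiv.swap i j) := rfl

theorem rOp_apply_of_eq (β z : F) {i j : I} (φ : (I → C) → F) {c : I → C} (h : c i = c j) :
    rOp β z i j φ c = φ c := by
  rw [rOp_apply, comp_swap_of_eq h, if_neg h.not_gt]

theorem rOp_apply_eq_zero (β z : F) {i j : I} {φ : (I → C) → F} {c : I → C} (hc : φ c = 0)
    (hswap : φ (c ∘ Equiv.swap i j) = 0) : rOp β z i j φ c = 0 := by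
  simp [rOp_apply, hc, hswap]

theorem permOp_semiconjBy_rOp (β z : F) (e : Equiv.Perm I) (i j : I) :
    SemiconjBy (permOp e) (rOp (C := C) β z i j) (rOp β z (e i) (e j)) := by
  ext φ c
  simp only [Module.End.mul_apply, rOp_apply, permOp_apply, comp_perm_comp_swap,
    Function.comp_apply]

theorem rOp_commute (β a b : F) {i j k l : I} (hik : i ≠ k) (hil : i ≠ l) (hjk : j ≠ k)
    (hjl : j ≠ l) : Commute (rOp (C := C) β a i j) (rOp β b k l) := by
  ext φ c
  simp only [Module.End.mul_apply, rOp_apply, comp_swap_comp_swap_comm c hik hil hjk hjl,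
    Function.comp_apply, Equiv.swap_apply_of_ne_of_ne hik hil,
    Equiv.swap_apply_of_ne_of_ne hjk hjl, Equiv.swap_apply_of_ne_of_ne hik.symm hjk.symm,
    Equiv.swap_apply_of_ne_of_ne hil.symm hjl.symm]
  split_ifs <;> ring

theorem rOp_extend {J : Type*} [DecidableEq J] {v : J → I} (hv : Function.Injective v) (β z : F)
    (a b : J) (φ : (I → C) → F) (c : I → C) :
    (fun d : J → C => rOp β z (v a) (v b) φ (Function.extend v d c)) =
      rOp β z a b fun d => φ (Function.extend v d c) := by
  funext d
  simp only [rOp_apply, hv.extend_apply, extend_comp_swap hv]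

theorem yang_baxter_fin_three (β a b : F) :
    rOp (I := Fin 3) (C := C) β a 0 1 * (rOp β (a + b + β * a * b) 0 2 * rOp β b 1 2) =
      rOp β b 1 2 * (rOp β (a + b + β * a * b) 0 2 * rOp β a 0 1) := by
  ext φ d
  obtain ⟨p, q, r, rfl⟩ : ∃ p q r, d = ![p, q, r] := ⟨d 0, d 1, d 2, by ext k; fin_cases k <;> rfl⟩
  have hswap01 (p q r : C) : ![p, q, r] ∘ Equiv.swap 0 1 = ![q, p, r] := by
    ext k; fin_cases k <;> rfl
  have hswap02 (p q r : C) : ![p, q, r] ∘ Equiv.swap 0 2 = ![r, q, p] := by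
    ext k; fin_cases k <;> rfl
  have hswap12 (p q r : C) : ![p, q, r] ∘ Equiv.swap 1 2 = ![p, r, q] := by
    ext k; fin_cases k <;> rfl
  simp only [Module.End.mul_apply, rOp_apply, hswap01, hswap02, hswap12, Matrix.cons_val]
  rcases lt_trichotomy p q with hpq | hpq | hpq <;>
    rcases lt_trichotomy p r with hpr | hpr | hpr <;>
    rcases lt_trichotomy q r with hqr | hqr | hqr <;>
    first
    | order
    | subst_vars
      simp only [lt_irrefl, if_true, if_false, *, lt_asymm]
      try ring

theorem yang_baxter (β a b : F) {i j k : I} (hij : i ≠ j) (hik : i ≠ k) (hjk : j ≠ k) :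
    rOp (C := C) β a i j * (rOp β (a + b + β * a * b) i k * rOp β b j k) =
      rOp β b j k * (rOp β (a + b + β * a * b) i k * rOp β a i j) := by
  ext φ c
  have hv : Function.Injective ![i, j, k] := by
    intro m m'
    fin_cases m <;> fin_cases m' <;> simp_all [eq_comm]
  have hlocal (z : F) (m m' : Fin 3) := rOp_extend (C := C) hv β z m m'
  have hc : Function.extend ![i, j, k] (c ∘ ![i, j, k]) c = c := by
    funext l
    by_cases hl : ∃ m, ![i, j, k] m = l
    · obtain ⟨m, rfl⟩ := hl
      rw [hv.extend_apply, Function.comp_apply]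
    · rw [Function.extend_apply' _ _ _ hl]
  have := congrFun (congrArg (· fun d => φ (Function.extend ![i, j, k] d c))
    (yang_baxter_fin_three (C := C) β a b)) (c ∘ ![i, j, k])
  simpa [← hlocal, hc] using this

/-- The braided R-matrix `Ř` on the lines `i` and `j`. -/
def rCheck (β z : F) (i j : I) : Module.End F ((I → C) → F) :=
  permOp (Equiv.swap i j) * rOp β z i j

theorem rCheck_apply (β z : F) (i j : I) (φ : (I → C) → F) (c : I → C) :
    rCheck β z i j φ c = if c i < c j then (1 + β * z) * φ c + z * φ (c ∘ Equiv.swap i j)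
      else φ c := by
  simp only [rCheck, Module.End.mul_apply, permOp_apply, rOp_apply, comp_swap_comp_swap_self,
    Function.comp_apply, Equiv.swap_apply_left, Equiv.swap_apply_right]

theorem rCheck_commute_rOp (β a b : F) {i j k l : I} (hik : i ≠ k) (hil : i ≠ l) (hjk : j ≠ k)
    (hjl : j ≠ l) : Commute (rCheck (C := C) β a i j) (rOp β b k l) := by
  have hperm := permOp_semiconjBy_rOp (C := C) β b (Equiv.swap i j) k l
  rw [Equiv.swap_apply_of_ne_of_ne hik.symm hjk.symm,
    Equiv.swap_apply_of_ne_of_ne hil.symm hjl.symm] at hperm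
  exact hperm.mul_left (rOp_commute β a b hik hil hjk hjl)

theorem rCheck_semiconjBy_rOp_mul_rOp_left (β a b : F) {i j k : I} (hij : i ≠ j) (hik : i ≠ k)
    (hjk : j ≠ k) :
    SemiconjBy (rCheck (C := C) β a i j) (rOp β (a + b + β * a * b) i k * rOp β b j k)
      (rOp β b i k * rOp β (a + b + β * a * b) j k) := by
  have hperm := (permOp_semiconjBy_rOp (C := C) β b (Equiv.swap i j) j k).mul_right
    (permOp_semiconjBy_rOp β (a + b + β * a * b) (Equiv.swap i j) i k)
  rw [Equiv.swap_apply_left, Equiv.swap_apply_right,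
    Equiv.swap_apply_of_ne_of_ne hik.symm hjk.symm] at hperm
  refine hperm.mul_left ?_
  exact (yang_baxter β a b hij hik hjk).trans (mul_assoc _ _ _).symm

theorem rCheck_semiconjBy_rOp_mul_rOp_right (β a b : F) {i j k : I} (hij : i ≠ j) (hik : i ≠ k)
    (hjk : j ≠ k) :
    SemiconjBy (rCheck (C := C) β b j k) (rOp β (a + b + β * a * b) i k * rOp β a i j)
      (rOp β a i k * rOp β (a + b + β * a * b) i j) := by
  have hperm := (permOp_semiconjBy_rOp (C := C) β a (Equiv.swap j k) i j).mul_right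
    (permOp_semiconjBy_rOp β (a + b + β * a * b) (Equiv.swap j k) i k)
  rw [Equiv.swap_apply_left, Equiv.swap_apply_right,
    Equiv.swap_apply_of_ne_of_ne hij hik] at hperm
  refine hperm.mul_left ?_
  exact (yang_baxter β a b hij hik hjk).symm.trans (mul_assoc _ _ _).symm

end ROperators

theorem om_comp [Field F] (β u : F) {v w : F} (hv : 1 + β * v ≠ 0) (hw : 1 + β * w ≠ 0) :
    om β u w = om β u v + om β v w + β * om β u v * om β v w := by
  simp only [om]
  grind

section Monodromy

/-- The adjacent transposition `s_i`. -/
abbrev adj {n : ℕ} (i : Fin n) : Equiv.Perm (Fin (n + 1)) :=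
  Equiv.swap i.castSucc i.succ

variable {A C : Type*} [DecidableEq A] [LinearOrder C] [Field F] {K N : ℕ}

/-- The monodromy `R_{aN} ⋯ R_{a1}` of the auxiliary line `a`, acting on functions of colourings of
auxiliary lines `A` and sites `Fin N` together. -/
def monodromy (β u : F) (t : Fin N → F) (a : A) : Module.End F ((A ⊕ Fin N → C) → F) :=
  (List.ofFn fun j : Fin N => rOp β (om β u (t j.rev)) (Sum.inl a) (Sum.inr j.rev)).prod

/-- The ordered product of the monodromies of all auxiliary lines. -/
def prodMonodromy (β : F) (u : Fin K → F) (t : Fin N → F) :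
    Module.End F ((Fin K ⊕ Fin N → C) → F) :=
  (List.ofFn fun a : Fin K => monodromy β (u a) t a).prod

theorem rCheck_site_semiconjBy_monodromy (β u : F) {t : Fin (N + 1) → F}
    (ht : ∀ j, 1 + β * t j ≠ 0) (j : Fin N) (a : A) :
    SemiconjBy (rCheck β (om β (t j.castSucc) (t j.succ)) (Sum.inr j.castSucc) (Sum.inr j.succ))
      (monodromy (C := C) β u t a) (monodromy β u (t ∘ adj j) a) := by
  refine semiconjBy_prod_ofFn_of_adjacent j.rev ?_ fun i hi hi' => ?_
  · simp only [Fin.rev_castSucc, Fin.rev_succ, Fin.rev_rev, Function.comp_apply,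
      Equiv.swap_apply_left, Equiv.swap_apply_right]
    rw [om_comp β u (ht j.castSucc) (ht j.succ)]
    exact rCheck_semiconjBy_rOp_mul_rOp_right β _ _ (by simp) (by simp)
      (by simpa using Fin.castSucc_lt_succ.ne)
  · have hsucc : i.rev ≠ j.succ := fun h => hi (by rw [← Fin.rev_rev i, h, Fin.rev_succ])
    have hcast : i.rev ≠ j.castSucc := fun h => hi' (by rw [← Fin.rev_rev i, h, Fin.rev_castSucc])
    rw [Function.comp_apply, Equiv.swap_apply_of_ne_of_ne hcast hsucc]
    exact rCheck_commute_rOp β _ _ (by simp) (by simpa using hcast.symm) (by simp)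
      (by simpa using hsucc.symm)

theorem rCheck_site_semiconjBy_prodMonodromy (β : F) (u : Fin K → F) {t : Fin (N + 1) → F}
    (ht : ∀ j, 1 + β * t j ≠ 0) (j : Fin N) :
    SemiconjBy (rCheck β (om β (t j.castSucc) (t j.succ)) (Sum.inr j.castSucc) (Sum.inr j.succ))
      (prodMonodromy (C := C) β u t) (prodMonodromy β u (t ∘ adj j)) :=
  semiconjBy_prod_ofFn fun a => rCheck_site_semiconjBy_monodromy β (u a) ht j a

theorem monodromy_mul_monodromy (β u v : F) (t : Fin N → F) {a b : A} (hab : a ≠ b) :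
    monodromy (C := C) β u t a * monodromy β v t b =
      (List.ofFn fun j : Fin N => rOp β (om β u (t j.rev)) (Sum.inl a) (Sum.inr j.rev) *
        rOp β (om β v (t j.rev)) (Sum.inl b) (Sum.inr j.rev)).prod :=
  prod_ofFn_mul_prod_ofFn fun i j hij =>
    rOp_commute β _ _ (by simpa using hab.symm) (by simp) (by simp) (by simpa using hij.ne)

theorem rCheck_aux_semiconjBy_monodromy_mul_monodromy (β u : F) {v : F} {t : Fin N → F}
    (hv : 1 + β * v ≠ 0) (ht : ∀ j, 1 + β * t j ≠ 0) {a b : A} (hab : a ≠ b) :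
    SemiconjBy (rCheck β (om β u v) (Sum.inl a) (Sum.inl b))
      (monodromy (C := C) β u t a * monodromy β v t b)
      (monodromy β v t a * monodromy β u t b) := by
  rw [monodromy_mul_monodromy β u v t hab, monodromy_mul_monodromy β v u t hab]
  refine semiconjBy_prod_ofFn fun j => ?_
  rw [om_comp β u hv (ht j.rev)]
  exact rCheck_semiconjBy_rOp_mul_rOp_left β _ _ (by simpa using hab) (by simp) (by simp)

theorem rCheck_aux_semiconjBy_prodMonodromy (β : F) {u : Fin (K + 1) → F} {t : Fin N → F}
    (hu : ∀ a, 1 + β * u a ≠ 0) (ht : ∀ j, 1 + β * t j ≠ 0) (a : Fin K) :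
    SemiconjBy (rCheck β (om β (u a.castSucc) (u a.succ)) (Sum.inl a.castSucc) (Sum.inl a.succ))
      (prodMonodromy (C := C) β u t) (prodMonodromy β (u ∘ adj a) t) := by
  refine semiconjBy_prod_ofFn_of_adjacent a ?_ fun b hb hb' => ?_
  · simpa using rCheck_aux_semiconjBy_monodromy_mul_monodromy β (u a.castSucc) (hu a.succ) ht
      Fin.castSucc_lt_succ.ne
  · rw [Function.comp_apply, Equiv.swap_apply_of_ne_of_ne hb hb']
    exact semiconjBy_prod_ofFn fun j => rCheck_commute_rOp β _ _ (by simpa using hb.symm) (by simp)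
      (by simpa using hb'.symm) (by simp)

end Monodromy

section Bridge

open scoped Matrix

variable [Field F] {A : Type*} [DecidableEq A] {K N n : ℕ}

theorem Rsite_row (β u τ : F) (j : Fin N) (r : Fin n) (s : Fin N → Fin n) :
    Rsite n N β u τ j (r, s) =
      Pi.single (s j, Function.update s j r) (if s j < r then 1 + β * om β u τ else 1) +
        Pi.single (r, s) (if s j < r then om β u τ else 0) := by
  ext ⟨c, s'⟩
  by_cases hs' : ∀ l, l ≠ j → s l = s' l
  · obtain ⟨x, rfl⟩ : ∃ x, s' = Function.update s j x :=
      ⟨s' j, Function.eq_update_iff.2 ⟨rfl, fun l hl => (hs' l hl).symm⟩⟩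
    simp only [Rsite, Rmat, Matrix.of_apply, Pi.add_apply, Pi.single_apply, Prod.mk.injEq,
      Function.update_self, (Function.update_injective s j).eq_iff, Function.update_eq_self_iff,
      if_pos hs', mul_one]
    grind
  · have hswap : (c, s') ≠ (s j, Function.update s j r) := by
      rintro ⟨⟩
      exact hs' fun l hl => by simp [hl]
    have hid : (c, s') ≠ (r, s) := by
      rintro ⟨⟩
      exact hs' fun l _ => rfl
    simp [Rsite, hs', hswap, hid]

theorem elim_update_comp_swap {C : Type*} (f : A → C) (s : Fin N → C) (a : A) (j : Fin N) (r : C) :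
    Sum.elim (Function.update f a r) s ∘ Equiv.swap (Sum.inl a) (Sum.inr j) =
      Sum.elim (Function.update f a (s j)) (Function.update s j r) := by
  funext l
  simp only [Function.comp_apply, Equiv.swap_apply_def]
  grind

theorem rOp_elim_update (β u τ : F) (a : A) (j : Fin N) (f : A → Fin n)
    (φ : (A ⊕ Fin N → Fin n) → F) :
    (fun p : Fin n × (Fin N → Fin n) => rOp β (om β u τ) (Sum.inl a) (Sum.inr j) φ
        (Sum.elim (Function.update f a p.1) p.2)) =
      Rsite n N β u τ j *ᵥ fun p => φ (Sum.elim (Function.update f a p.1) p.2) := by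
  funext ⟨r, s⟩
  simp only [rOp_apply, elim_update_comp_swap, Sum.elim_inl, Sum.elim_inr, Function.update_self,
    Matrix.mulVec, Rsite_row, add_dotProduct, single_dotProduct]
  split_ifs <;> ring

theorem monodromy_elim_update (β u : F) (t : Fin N → F) (a : A) (f : A → Fin n)
    (φ : (A ⊕ Fin N → Fin n) → F) :
    (fun p : Fin n × (Fin N → Fin n) => monodromy β u t a φ
        (Sum.elim (Function.update f a p.1) p.2)) =
      Tmono n N β u t *ᵥ fun p => φ (Sum.elim (Function.update f a p.1) p.2) := by
  have hlist (l : List (Fin N)) :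
      (fun p : Fin n × (Fin N → Fin n) =>
        (l.map fun j => rOp β (om β u (t j)) (Sum.inl a) (Sum.inr j)).prod φ
          (Sum.elim (Function.update f a p.1) p.2)) =
        (l.map fun j => Rsite n N β u (t j) j).prod *ᵥ
          fun p => φ (Sum.elim (Function.update f a p.1) p.2) := by
    induction l with
    | nil => simp only [List.map_nil, List.prod_nil, Module.End.one_apply, Matrix.one_mulVec]
    | cons j l ih =>
      simp only [List.map_cons, List.prod_cons, Module.End.mul_apply]
      rw [rOp_elim_update, ih, Matrix.mulVec_mulVec]
  rw [Tmono, List.ofFn_eq_map, ← List.map_reverse, ← hlist, List.finRange_reverse, List.map_map]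
  simp only [monodromy, List.ofFn_eq_map]
  rfl

theorem extend_cons {C : Type*} {e : Fin (K + 1) → A} (he : Function.Injective e) (c : C)
    (i : Fin K → C) (f : A → C) :
    Function.extend e (Fin.cons c i : Fin (K + 1) → C) f =
      Function.extend (fun k => e k.succ) i (Function.update f (e 0) c) := by
  have hsucc : Function.Injective fun k : Fin K => e k.succ := he.comp (Fin.succ_injective K)
  funext a
  by_cases ha : ∃ k, e k = a
  · obtain ⟨k, rfl⟩ := ha
    rw [he.extend_apply]
    cases k using Fin.cases with
    | zero =>
      rw [Function.extend_apply' _ _ _ fun ⟨k, hk⟩ => Fin.succ_ne_zero k (he hk),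
        Function.update_self, Fin.cons_zero]
    | succ k => rw [hsucc.extend_apply (fun k => i k), Fin.cons_succ]
  · rw [Function.extend_apply' _ _ _ ha,
      Function.extend_apply' _ _ _ fun ⟨k, hk⟩ => ha ⟨k.succ, hk⟩,
      Function.update_of_ne fun h => ha ⟨0, h.symm⟩]

theorem prod_monodromy_apply (β : F) (u : Fin K → F) (t : Fin N → F) {e : Fin K → A}
    (he : Function.Injective e) (φ : (A ⊕ Fin N → Fin n) → F) (f : A → Fin n)
    (s : Fin N → Fin n) :
    (List.ofFn fun k => monodromy β (u k) t (e k)).prod φ (Sum.elim f s) =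
      ∑ i : Fin K → Fin n, ((List.ofFn fun k => blockOp n N β (u k) t (f (e k)) (i k)).prod *ᵥ
        fun s' => φ (Sum.elim (Function.extend e i f) s')) s := by
  induction K generalizing f s with
  | zero =>
    have hextend (i : Fin 0 → Fin n) : Function.extend e i f = f :=
      funext fun a => Function.extend_apply' _ _ _ fun ⟨k, _⟩ => k.elim0
    simp [hextend]
  | succ K ih =>
    have hsucc : Function.Injective fun k : Fin K => e k.succ := he.comp (Fin.succ_injective K)
    have hrest (c : Fin n) (k : Fin K) : Function.update f (e 0) c (e k.succ) = f (e k.succ) :=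
      Function.update_of_ne (he.ne (Fin.succ_ne_zero k)) c f
    have hfirst := congrFun (monodromy_elim_update β (u 0) t (e 0) f
      ((List.ofFn fun k : Fin K => monodromy β (u k.succ) t (e k.succ)).prod φ)) (f (e 0), s)
    rw [Function.update_eq_self] at hfirst
    rw [List.ofFn_succ, List.prod_cons, Module.End.mul_apply, hfirst, Matrix.mulVec, dotProduct,
      ← (Fin.consEquiv fun _ : Fin (K + 1) => Fin n).sum_comp, Fintype.sum_prod_type,
      Fintype.sum_prod_type]
    refine Finset.sum_congr rfl fun c _ => ?_
    simp only [ih _ hsucc, hrest, Finset.mul_sum]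
    rw [Finset.sum_comm]
    refine Finset.sum_congr rfl fun i _ => ?_
    have hcons : (Fin.consEquiv fun _ : Fin (K + 1) => Fin n) (c, i) = Fin.cons c i := rfl
    simp only [hcons, extend_cons he, List.ofFn_succ, Fin.cons_zero, Fin.cons_succ,
      List.prod_cons, ← Matrix.mulVec_mulVec]
    rfl

end Bridge

section Nesting

open scoped Matrix

variable [Field F] {K N n : ℕ}

/-- The nesting step: the state `∑ i, ⟨i|ψ⟩ • B_{i_1}(u_1) ⋯ B_{i_K}(u_K) |Ω⟩` of a `GL(n + 1)`
model built from a state `ψ` of a `GL(n)` model. -/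
def nest (β : F) (u : Fin K → F) (t : Fin N → F) (ψ : (Fin K → Fin n) → F) :
    (Fin N → Fin (n + 1)) → F := fun s =>
  ∑ i : Fin K → Fin n, ψ i *
    ((List.ofFn fun a => blockOp (n + 1) N β (u a) t 0 (i a).succ).prod *ᵥ
      ket (n + 1) N fun _ => 0) s

/-- The colouring with the nonzero colours `i a + 1` on the auxiliary lines and `0` on the sites. -/
def embed (i : Fin K → Fin n) : Fin K ⊕ Fin N → Fin (n + 1) :=
  Sum.elim (fun a => (i a).succ) fun _ => 0

theorem embed_injective :
    Function.Injective (embed : (Fin K → Fin n) → Fin K ⊕ Fin N → Fin (n + 1)) := fun _ _ h =>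
  funext fun a => Fin.succ_injective n (congrFun h (Sum.inl a))

/-- The function of colourings given by `ψ` on the auxiliary lines, with colours shifted by one,
and by the pseudo-vacuum on the sites. -/
def feed (ψ : (Fin K → Fin n) → F) : (Fin K ⊕ Fin N → Fin (n + 1)) → F :=
  Function.extend embed ψ 0

theorem feed_embed (ψ : (Fin K → Fin n) → F) (i : Fin K → Fin n) :
    feed (N := N) ψ (embed i) = ψ i :=
  embed_injective.extend_apply ψ 0 i

theorem feed_eq_zero (ψ : (Fin K → Fin n) → F) {c : Fin K ⊕ Fin N → Fin (n + 1)}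
    (hc : ∀ i, c ≠ embed i) : feed ψ c = 0 :=
  Function.extend_apply' ψ (fun _ => 0) c fun ⟨i, hi⟩ => hc i hi.symm

theorem feed_eq_zero_of_site (ψ : (Fin K → Fin n) → F) {c : Fin K ⊕ Fin N → Fin (n + 1)}
    {j : Fin N} (hc : c (Sum.inr j) ≠ 0) : feed ψ c = 0 :=
  feed_eq_zero ψ fun i hi => hc (by rw [hi]; rfl)

theorem feed_eq_zero_of_aux (ψ : (Fin K → Fin n) → F) {c : Fin K ⊕ Fin N → Fin (n + 1)}
    {a : Fin K} (hc : c (Sum.inl a) = 0) : feed ψ c = 0 :=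
  feed_eq_zero ψ fun i hi => Fin.succ_ne_zero (i a) (by rw [← hc, hi]; rfl)

theorem feed_elim_succ (ψ : (Fin K → Fin n) → F) (i : Fin K → Fin n) :
    (fun s : Fin N → Fin (n + 1) => feed ψ (Sum.elim (fun a => (i a).succ) s)) =
      ψ i • ket (n + 1) N fun _ => 0 := by
  funext s
  by_cases hs : s = fun _ => 0
  · subst hs
    exact (feed_embed ψ i).trans (by simp [ket])
  · obtain ⟨j, hj⟩ := Function.ne_iff.1 hs
    rw [feed_eq_zero_of_site ψ (j := j) hj, Pi.smul_apply, ket, if_neg hs, smul_zero]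

theorem nest_eq_prodMonodromy (β : F) (u : Fin K → F) (t : Fin N → F) (ψ : (Fin K → Fin n) → F)
    (s : Fin N → Fin (n + 1)) :
    nest β u t ψ s = prodMonodromy β u t (feed ψ) (Sum.elim (fun _ => 0) s) := by
  refine Eq.trans ?_ (prod_monodromy_apply β u t Function.injective_id (feed ψ) (fun _ => 0) s).symm
  simp only [Function.extend_id]
  refine Fintype.sum_of_injective (fun i a => (i a).succ)
    (fun _ _ h => funext fun a => Fin.succ_injective n (congrFun h a)) _ _ (fun i hi => ?_)
    fun i => ?_
  · obtain ⟨a, ha⟩ : ∃ a, i a = 0 := by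
      by_contra! hne
      exact hi ⟨fun a => (i a).pred (hne a), by simp⟩
    have hzero : (fun s' : Fin N → Fin (n + 1) => feed ψ (Sum.elim i s')) = 0 :=
      funext fun s' => feed_eq_zero_of_aux ψ (a := a) ha
    rw [hzero, Matrix.mulVec_zero, Pi.zero_apply]
  · rw [feed_elim_succ, Matrix.mulVec_smul, Pi.smul_apply, smul_eq_mul]

theorem elim_comp_swap_inr {C : Type*} (f : Fin K → C) (s : Fin N → C) (i j : Fin N) :
    Sum.elim f s ∘ Equiv.swap (Sum.inr i) (Sum.inr j) = Sum.elim f (s ∘ Equiv.swap i j) := by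
  rw [← Equiv.Perm.sumCongr_refl_swap]
  exact Sum.elim_comp_map

theorem embed_comp_swap_inl (i : Fin K → Fin n) (a b : Fin K) :
    embed (N := N) i ∘ Equiv.swap (Sum.inl a) (Sum.inl b) = embed (i ∘ Equiv.swap a b) := by
  rw [← Equiv.Perm.sumCongr_swap_refl]
  exact Sum.elim_comp_map

theorem rCheck_site_feed (β z : F) (ψ : (Fin K → Fin n) → F) (i j : Fin N) :
    rCheck β z (Sum.inr i) (Sum.inr j) (feed ψ) = feed ψ := by
  funext c
  rw [rCheck_apply]
  split_ifs with hc
  · have hj : c (Sum.inr j) ≠ 0 := (Fin.zero_le _).trans_lt hc |>.ne'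
    have hswap : (c ∘ Equiv.swap (Sum.inr i) (Sum.inr j)) (Sum.inr i) ≠ 0 := by simpa using hj
    rw [feed_eq_zero_of_site ψ hj, feed_eq_zero_of_site ψ hswap, mul_zero, mul_zero, add_zero]
  · rfl

theorem rCheck_aux_feed (β z : F) (ψ : (Fin K → Fin n) → F) (a b : Fin K) :
    rCheck β z (Sum.inl a) (Sum.inl b) (feed (N := N) ψ) = feed (rCheck β z a b ψ) := by
  funext c
  by_cases hc : ∃ i, c = embed i
  · obtain ⟨i, rfl⟩ := hc
    simp only [rCheck_apply, embed_comp_swap_inl, feed_embed]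
    simp only [embed, Sum.elim_inl, Fin.succ_lt_succ_iff]
  · push Not at hc
    have hswap (i : Fin K → Fin n) : c ∘ Equiv.swap (Sum.inl a) (Sum.inl b) ≠ embed i := fun h =>
      hc (i ∘ Equiv.swap a b) (by rw [← embed_comp_swap_inl, ← h, comp_swap_comp_swap_self])
    simp [rCheck_apply, feed_eq_zero _ hc, feed_eq_zero _ hswap]

theorem rCheck_nest (β : F) (u : Fin K → F) {t : Fin (N + 1) → F} (ht : ∀ j, 1 + β * t j ≠ 0)
    (ψ : (Fin K → Fin n) → F) (j : Fin N) :
    rCheck β (om β (t j.castSucc) (t j.succ)) j.castSucc j.succ (nest β u t ψ) =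
      nest β u (t ∘ adj j) ψ := by
  funext s
  have h := congrArg (fun T => T (feed ψ) (Sum.elim (fun _ => 0) s))
    (rCheck_site_semiconjBy_prodMonodromy (C := Fin (n + 1)) β u ht j).eq
  simp only [Module.End.mul_apply, rCheck_site_feed] at h
  rw [nest_eq_prodMonodromy, ← h]
  simp only [rCheck_apply, elim_comp_swap_inr, nest_eq_prodMonodromy, Sum.elim_inr]

theorem nest_comp_adj_rCheck (β : F) {u : Fin (K + 1) → F} {t : Fin N → F}
    (hu : ∀ a, 1 + β * u a ≠ 0) (ht : ∀ j, 1 + β * t j ≠ 0) (ψ : (Fin (K + 1) → Fin n) → F)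
    (a : Fin K) :
    nest β (u ∘ adj a) t (rCheck β (om β (u a.castSucc) (u a.succ)) a.castSucc a.succ ψ) =
      nest β u t ψ := by
  funext s
  have h := congrArg (fun T => T (feed ψ) (Sum.elim (fun _ => 0) s))
    (rCheck_aux_semiconjBy_prodMonodromy (C := Fin (n + 1)) β hu ht a).eq
  simp only [Module.End.mul_apply, rCheck_aux_feed] at h
  rw [nest_eq_prodMonodromy, ← h, nest_eq_prodMonodromy, rCheck_apply]
  simp

end Nesting

section Paths

variable [CommSemiring F] {X : Type*}

theorem prod_ofFn_induction {K : ℕ} (T : Fin K → Module.End F (X → F)) (V : ℕ → (X → F) → Prop)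
    (hV : ∀ (i : Fin K) χ, V (i + 1) χ → V i (T i χ)) {φ : X → F} (hφ : V K φ) :
    V 0 ((List.ofFn T).prod φ) := by
  induction K generalizing V with
  | zero => simpa using hφ
  | succ K ih =>
    rw [List.ofFn_succ, List.prod_cons, Module.End.mul_apply]
    exact hV 0 _ (ih (fun i => T i.succ) (fun m => V (m + 1)) (fun i => hV i.succ) hφ)

theorem prod_ofFn_apply_of_path {K : ℕ} (T : Fin K → Module.End F (X → F)) (D : ℕ → X)
    (W : Fin K → F) (V : ℕ → (X → F) → Prop)
    (hV : ∀ (i : Fin K) χ, V (i + 1) χ → V i (T i χ))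
    (hD : ∀ (i : Fin K) χ, V (i + 1) χ → T i χ (D i) = W i * χ (D (i + 1)))
    {φ : X → F} (hφ : V K φ) :
    (List.ofFn T).prod φ (D 0) = (∏ i, W i) * φ (D K) := by
  induction K generalizing D V with
  | zero => simp
  | succ K ih =>
    have hrest := prod_ofFn_induction (fun i : Fin K => T i.succ) (fun m => V (m + 1))
      (fun i => hV i.succ) hφ
    rw [List.ofFn_succ, List.prod_cons, Module.End.mul_apply, Fin.prod_univ_succ, mul_assoc,
      ← ih (fun i => T i.succ) (fun m => D (m + 1)) (fun i => W i.succ) (fun m => V (m + 1))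
        (fun i => hV i.succ) (fun i => hD i.succ) hφ]
    exact hD 0 _ hrest

end Paths

section MonodromyPaths

variable {A C : Type*} [DecidableEq A] [LinearOrder C] [Field F] {K N : ℕ}

theorem monodromy_apply_of_path (β u : F) (t : Fin N → F) (a : A) (D : ℕ → A ⊕ Fin N → C)
    (W : Fin N → F) (V : ℕ → ((A ⊕ Fin N → C) → F) → Prop)
    (hV : ∀ (j : Fin N) χ, V j χ →
      V (j + 1) (rOp β (om β u (t j)) (Sum.inl a) (Sum.inr j) χ))
    (hD : ∀ (j : Fin N) χ, V j χ →
      rOp β (om β u (t j)) (Sum.inl a) (Sum.inr j) χ (D (j + 1)) = W j * χ (D j))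
    {φ : (A ⊕ Fin N → C) → F} (hφ : V 0 φ) :
    monodromy β u t a φ (D N) = (∏ j, W j) * φ (D 0) := by
  have hrev (i : Fin N) : N - i = i.rev + 1 ∧ N - (i + 1) = i.rev := by
    rw [Fin.val_rev]; omega
  have h := prod_ofFn_apply_of_path
    (fun j : Fin N => rOp β (om β u (t j.rev)) (Sum.inl a) (Sum.inr j.rev)) (fun i => D (N - i))
    (fun i => W i.rev) (fun i => V (N - i))
    (fun i χ => by rw [(hrev i).1, (hrev i).2]; exact hV i.rev χ)
    (fun i χ => by rw [(hrev i).1, (hrev i).2]; exact hD i.rev χ) (φ := φ) (by simpa using hφ)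
  rw [Nat.sub_self] at h
  exact h.trans (by rw [← Equiv.prod_comp Fin.revPerm W]; rfl)

theorem monodromy_apply_eq_zero (β u : F) (t : Fin N → F) (a : A) {Q : (A ⊕ Fin N → C) → Prop}
    (hQ : ∀ (j : Fin N) c, Q c → Q (c ∘ Equiv.swap (Sum.inl a) (Sum.inr j)))
    {φ : (A ⊕ Fin N → C) → F} (hφ : ∀ c, Q c → φ c = 0) :
    ∀ c, Q c → monodromy β u t a φ c = 0 :=
  prod_ofFn_induction _ (fun _ χ => ∀ c, Q c → χ c = 0)
    (fun _ _ hχ c hc => rOp_apply_eq_zero β _ (hχ c hc) (hχ _ (hQ _ c hc))) hφ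

theorem prodMonodromy_apply_eq_zero (β : F) (u : Fin K → F) (t : Fin N → F)
    {Q : (Fin K ⊕ Fin N → C) → Prop}
    (hQ : ∀ (a : Fin K) (j : Fin N) c, Q c → Q (c ∘ Equiv.swap (Sum.inl a) (Sum.inr j)))
    {φ : (Fin K ⊕ Fin N → C) → F} (hφ : ∀ c, Q c → φ c = 0) :
    ∀ c, Q c → prodMonodromy β u t φ c = 0 :=
  prod_ofFn_induction _ (fun _ χ => ∀ c, Q c → χ c = 0)
    (fun a _ hχ => monodromy_apply_eq_zero β _ t a (hQ a) hχ) hφ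

end MonodromyPaths

section FlagState

variable [Field F] {K N : ℕ}

/-- The Bethe vector `B_K(u_1) ⋯ B_1(u_K) |Ω⟩`, the nesting step applied to the reference state
`|ω_K⟩`. -/
def flagState (β : F) (u : Fin K → F) (t : Fin N → F) : (Fin N → Fin (K + 1)) → F :=
  nest β u t (ket K K (omegaPerm K))

theorem feed_ket {n : ℕ} (g : Fin K → Fin n) (c : Fin K ⊕ Fin N → Fin (n + 1)) :
    feed (F := F) (ket n K g) c = if c = embed g then 1 else 0 := by
  split_ifs with hc
  · rw [hc, feed_embed, ket, if_pos rfl]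
  · by_cases hi : ∃ i, c = embed i
    · obtain ⟨i, rfl⟩ := hi
      rw [feed_embed, ket, if_neg fun h => hc (by rw [h])]
    · exact feed_eq_zero _ (not_exists.1 hi)

theorem embed_inr {n : ℕ} (i : Fin K → Fin n) (j : Fin N) : embed i (Sum.inr j) = 0 :=
  rfl

theorem val_embed_omegaPerm_inl (a : Fin K) :
    (embed (N := N) (omegaPerm K) (Sum.inl a) : ℕ) = K - a := by
  simp only [embed, omegaPerm, Equiv.coe_fn_mk, Sum.elim_inl]
  grind

theorem sum_ite_eq_embed_omegaPerm (v : Fin (K + 1)) :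
    (∑ y, if (embed (omegaPerm K) : Fin K ⊕ Fin (K + 1) → Fin (K + 1)) y = v then 1 else 0) =
      (∑ _a : Fin K, if 0 = v then 1 else 0) + 1 := by
  have hrev : (∑ a, if (omegaPerm K a).succ = v then 1 else 0) =
      ∑ a : Fin K, if a.succ = v then 1 else 0 :=
    Equiv.sum_comp (omegaPerm K) fun a => if a.succ = v then 1 else 0
  have hone : (∑ l : Fin (K + 1), if l = v then 1 else 0) = 1 := by simp
  rw [Fin.sum_univ_succ] at hone
  calc _ = (∑ a, if (omegaPerm K a).succ = v then 1 else 0) +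
        ∑ _l : Fin (K + 1), if 0 = v then 1 else 0 := Fintype.sum_sum_type _
    _ = _ := by rw [hrev, Fin.sum_univ_succ]; omega

/- The operators only permute colours, so each colour occurs as often as in the initial
colouring. -/
theorem bijective_of_flagState_ne_zero {β : F} {u : Fin K → F} {t : Fin (K + 1) → F}
    {s : Fin (K + 1) → Fin (K + 1)} (hs : flagState β u t s ≠ 0) : Function.Bijective s := by
  have hcount (v : Fin (K + 1)) : (∑ l, if s l = v then 1 else 0) = 1 := by
    by_contra hv
    refine hs ((nest_eq_prodMonodromy ..).trans (prodMonodromy_apply_eq_zero β u t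
      (Q := fun c => (∑ y, if c y = v then 1 else 0) ≠ ∑ y, if (embed (omegaPerm K) :
        Fin K ⊕ Fin (K + 1) → Fin (K + 1)) y = v then 1 else 0)
      (fun a j c hc => ?_) (fun c hc => ?_) _ ?_))
    · rwa [← Equiv.sum_comp (Equiv.swap (Sum.inl a) (Sum.inr j)) fun y => if c y = v then 1 else 0]
        at hc
    · rw [feed_ket, if_neg fun h => hc (by rw [h])]
    · rw [sum_ite_eq_embed_omegaPerm, Fintype.sum_sum_type]
      exact fun h => hv (Nat.add_left_cancel h)
  refine Finite.injective_iff_bijective.1 (Finite.injective_iff_surjective.2 fun v => ?_)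
  by_contra! hv
  simpa [hv] using hcount v

/-- The only path of colourings contributing to the component `|ω⟩` of the flag state, read after
the sites before `j` of the row `a`. -/
def omegaPath (K a j : ℕ) : Fin K ⊕ Fin (K + 1) → Fin (K + 1)
  | .inl b => ⟨if b < a then K - b else if b = a then K - a - j else 0, by split_ifs <;> omega⟩
  | .inr l => ⟨if l < j then K - a - l else K - a - (l + 1), by split_ifs <;> omega⟩

theorem omegaPath_succ_comp_swap (a : Fin K) (j : Fin (K + 1)) :
    omegaPath K a (j + 1) ∘ Equiv.swap (Sum.inl a) (Sum.inr j) = omegaPath K a j := by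
  funext l
  rcases l with l | l <;> grind [omegaPath]

theorem omegaPath_succ_last (a : ℕ) : omegaPath K (a + 1) (K + 1) = omegaPath K a 0 := by
  funext l
  rcases l with l | l <;> grind [omegaPath]

theorem omegaPath_zero_last :
    omegaPath K 0 (K + 1) = Sum.elim (fun _ => 0) (omegaPerm (K + 1)) := by
  funext l
  rcases l with l | l
  · grind [omegaPath]
  · simp only [omegaPath, omegaPerm, Equiv.coe_fn_mk, Sum.elim_inr]; grind

theorem omegaPath_last_last : omegaPath K K (K + 1) = embed (omegaPerm K) := by
  funext l
  rcases l with l | l <;> grind [omegaPath, val_embed_omegaPerm_inl, embed_inr]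

theorem monodromy_apply_omegaPath (β u : F) (t : Fin (K + 1) → F) (a : Fin K)
    (χ : (Fin K ⊕ Fin (K + 1) → Fin (K + 1)) → F) :
    monodromy β u t a χ (omegaPath K a (K + 1)) = χ (omegaPath K (a + 1) (K + 1)) := by
  rw [omegaPath_succ_last, monodromy_apply_of_path β u t a (omegaPath K a) (fun _ => 1)
    (fun _ _ => True) (fun _ _ _ => trivial) (fun j χ _ => ?_) trivial, Finset.prod_const_one,
    one_mul]
  rw [rOp_apply, if_neg (by grind [omegaPath]), omegaPath_succ_comp_swap, one_mul]

theorem flagState_omegaPerm (β : F) (u : Fin K → F) (t : Fin (K + 1) → F) :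
    flagState β u t (omegaPerm (K + 1)) = 1 := by
  rw [flagState, nest_eq_prodMonodromy, ← omegaPath_zero_last, prodMonodromy,
    prod_ofFn_apply_of_path _ (fun a => omegaPath K a (K + 1)) (fun _ => 1) (fun _ _ => True)
      (fun _ _ _ => trivial)
      (fun a χ _ => (monodromy_apply_omegaPath β (u a) t a χ).trans (one_mul _).symm) trivial,
    omegaPath_last_last, feed_ket, if_pos rfl, Finset.prod_const_one, one_mul]

/-- The only path of colourings contributing to the component `|0, 1, …, K⟩` of the flag state, read
after the sites before `j` of the row `a`. -/
def idPath (K a j : ℕ) : Fin K ⊕ Fin (K + 1) → Fin (K + 1)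
  | .inl b => ⟨if b < a ∨ (b = a ∧ j + a ≤ K) then K - b else 0, by split_ifs <;> omega⟩
  | .inr l => ⟨if l + a < K ∨ (l + a = K ∧ l < j) then l else 0, by split_ifs <;> omega⟩

theorem idPath_succ_comp_swap {a : Fin K} {j : Fin (K + 1)} (h : (j : ℕ) + a = K) :
    idPath K a (j + 1) ∘ Equiv.swap (Sum.inl a) (Sum.inr j) = idPath K a j := by
  funext l
  rcases l with l | l <;> grind [idPath]

theorem idPath_succ_of_ne {a j : ℕ} (h : j + a ≠ K) : idPath K a (j + 1) = idPath K a j := by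
  funext l
  rcases l with l | l <;> grind [idPath]

theorem idPath_succ_last (a : ℕ) : idPath K (a + 1) (K + 1) = idPath K a 0 := by
  funext l
  rcases l with l | l <;> grind [idPath]

theorem idPath_zero_last : idPath K 0 (K + 1) = Sum.elim (fun _ => 0) id := by
  funext l
  rcases l with l | l <;> grind [idPath]

theorem idPath_last_last : idPath K K (K + 1) = embed (omegaPerm K) := by
  funext l
  rcases l with l | l <;> grind [idPath, val_embed_omegaPerm_inl, embed_inr]

/-- The colour `K - a`, with which the line `a` enters, is on the line `a` or on a site before `j`.
This holds along all paths through the first `j` sites of the row `a`. -/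
def Carries (a : Fin K) (j : ℕ) (c : Fin K ⊕ Fin (K + 1) → Fin (K + 1)) : Prop :=
  (c (Sum.inl a) : ℕ) = K - a ∨ ∃ l : Fin (K + 1), (l : ℕ) < j ∧ (c (Sum.inr l) : ℕ) = K - a

theorem rOp_apply_eq_zero_of_not_carries (β z : F) {a : Fin K} {j : Fin (K + 1)}
    {χ : (Fin K ⊕ Fin (K + 1) → Fin (K + 1)) → F} (hχ : ∀ c, ¬Carries a j c → χ c = 0)
    (c : Fin K ⊕ Fin (K + 1) → Fin (K + 1)) (hc : ¬Carries a (j + 1) c) :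
    rOp β z (Sum.inl a) (Sum.inr j) χ c = 0 :=
  rOp_apply_eq_zero β z (hχ c (by grind [Carries])) (hχ _ (by grind [Carries]))

theorem rOp_apply_idPath (β z : F) {a : Fin K} {j : Fin (K + 1)}
    {χ : (Fin K ⊕ Fin (K + 1) → Fin (K + 1)) → F} (hχ : ∀ c, ¬Carries a j c → χ c = 0) :
    rOp β z (Sum.inl a) (Sum.inr j) χ (idPath K a (j + 1)) =
      (if (j : ℕ) + a < K then z else 1) * χ (idPath K a j) := by
  rcases lt_trichotomy ((j : ℕ) + a) K with h | h | h
  · have hzero : χ (idPath K a (j + 1) ∘ Equiv.swap (Sum.inl a) (Sum.inr j)) = 0 :=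
      hχ _ (by grind [Carries, idPath])
    rw [if_pos h, rOp_apply, if_pos (by grind [idPath]), hzero, idPath_succ_of_ne h.ne, mul_zero,
      zero_add]
  · rw [if_neg h.not_lt, one_mul, rOp_apply, if_neg (by grind [idPath]), idPath_succ_comp_swap h]
  · rw [if_neg h.not_gt, one_mul, rOp_apply_of_eq β z χ (by grind [idPath]),
      idPath_succ_of_ne h.ne']

theorem monodromy_apply_idPath (β u : F) (t : Fin (K + 1) → F) {a : Fin K}
    {χ : (Fin K ⊕ Fin (K + 1) → Fin (K + 1)) → F}
    (hχ : ∀ c, (c (Sum.inl a) : ℕ) ≠ K - a → χ c = 0) :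
    monodromy β u t a χ (idPath K a (K + 1)) =
      (∏ j : Fin (K + 1), if (j : ℕ) + a < K then om β u (t j) else 1) *
        χ (idPath K (a + 1) (K + 1)) := by
  rw [idPath_succ_last]
  exact monodromy_apply_of_path β u t a (idPath K a) _ (fun j χ => ∀ c, ¬Carries a j c → χ c = 0)
    (fun _ _ => rOp_apply_eq_zero_of_not_carries β _) (fun _ _ => rOp_apply_idPath β _)
    fun c hc => hχ c (by grind [Carries])

theorem flagState_id (β : F) (u : Fin K → F) (t : Fin (K + 1) → F) :
    flagState β u t id =
      ∏ a : Fin K, ∏ j : Fin (K + 1), if (j : ℕ) + a < K then om β (u a) (t j) else 1 := by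
  rw [flagState, nest_eq_prodMonodromy, ← idPath_zero_last, prodMonodromy,
    prod_ofFn_apply_of_path _ (fun a => idPath K a (K + 1)) _
      (fun m χ => ∀ b : Fin K, (b : ℕ) < m → ∀ c, (c (Sum.inl b) : ℕ) ≠ K - b → χ c = 0)
      (fun a χ hχ b hb => ?_)
      (fun a χ hχ => monodromy_apply_idPath β (u a) t (hχ a (Nat.lt_succ_self _)))
      fun b _ c hc => ?_,
    idPath_last_last, feed_ket, if_pos rfl, mul_one]
  · refine monodromy_apply_eq_zero β (u a) t a (fun j c hc => ?_) (hχ b (by omega))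
    grind
  · rw [feed_ket, if_neg]
    rintro rfl
    exact hc (val_embed_omegaPerm_inl b)

end FlagState

section Permutations

variable {n : ℕ}

theorem adj_apply_lt_adj_apply {i : Fin n} {a b : Fin (n + 1)} (hab : a < b)
    (h : ¬ (a = i.castSucc ∧ b = i.succ)) : adj i a < adj i b := by
  grind

theorem mul_adj_adj (w : Equiv.Perm (Fin (n + 1))) (i : Fin n) : w * adj i * adj i = w := by
  rw [mul_assoc, Equiv.swap_mul_self, mul_one]

theorem inversions_mul_adj (w : Equiv.Perm (Fin (n + 1))) {i : Fin n}
    (h : w i.castSucc < w i.succ) :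
    ({p | p.1 < p.2 ∧ (w * adj i) p.2 < (w * adj i) p.1} : Finset (Fin (n + 1) × Fin (n + 1))) =
      insert (i.castSucc, i.succ)
        (({p | p.1 < p.2 ∧ w p.2 < w p.1} : Finset (Fin (n + 1) × Fin (n + 1))).map
          ((adj i).prodCongr (adj i)).toEmbedding) := by
  ext ⟨a, b⟩
  simp only [Finset.mem_filter, Finset.mem_univ, true_and, Finset.mem_insert,
    Finset.mem_map_equiv, Equiv.prodCongr_symm, Equiv.symm_swap, Equiv.prodCongr_apply, Prod.map,
    Prod.mk.injEq]
  rw [Equiv.Perm.mul_apply, Equiv.Perm.mul_apply]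
  constructor
  · rintro ⟨hab, hw⟩
    by_cases hi : a = i.castSucc ∧ b = i.succ
    · exact .inl hi
    · exact .inr ⟨adj_apply_lt_adj_apply hab hi, hw⟩
  · rintro (⟨rfl, rfl⟩ | ⟨hab, hw⟩)
    · simpa [adj] using h
    · refine ⟨?_, hw⟩
      simpa [adj] using adj_apply_lt_adj_apply (i := i) hab fun ⟨ha, hb⟩ =>
        hw.not_ge (by simpa [ha, hb] using h.le)

theorem permLength_mul_adj_of_lt (w : Equiv.Perm (Fin (n + 1))) {i : Fin n}
    (h : w i.castSucc < w i.succ) : permLength (w * adj i) = permLength w + 1 := by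
  rw [permLength, inversions_mul_adj w h, Finset.card_insert_of_notMem, Finset.card_map,
    permLength]
  simp [Finset.mem_map_equiv, Fin.castSucc_lt_succ.le]

theorem permLength_mul_adj_of_gt (w : Equiv.Perm (Fin (n + 1))) {i : Fin n}
    (h : w i.succ < w i.castSucc) : permLength (w * adj i) + 1 = permLength w := by
  rw [← permLength_mul_adj_of_lt (w * adj i) (i := i) (by simpa [adj] using h), mul_adj_adj]

theorem permLength_mul_adj_le (w : Equiv.Perm (Fin (n + 1))) (i : Fin n) :
    permLength (w * adj i) ≤ permLength w + 1 := by
  rcases lt_or_gt_of_ne (w.injective.ne Fin.castSucc_lt_succ.ne : w i.castSucc ≠ w i.succ)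
    with h | h
  · exact (permLength_mul_adj_of_lt w h).le
  · have := permLength_mul_adj_of_gt w h
    omega

theorem permLength_one : permLength (1 : Equiv.Perm (Fin n)) = 0 := by
  rw [permLength, Finset.card_eq_zero, Finset.filter_eq_empty_iff]
  exact fun _ _ h => h.1.not_gt h.2

theorem exists_descent {w : Equiv.Perm (Fin (n + 1))} (hw : w ≠ 1) :
    ∃ i : Fin n, w i.succ < w i.castSucc := by
  by_contra! h
  have hmono : StrictMono w := Fin.strictMono_iff_lt_succ.mpr fun i =>
    (h i).lt_of_ne (w.injective.ne Fin.castSucc_lt_succ.ne)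
  exact hw (DFunLike.coe_injective ((hmono.range_inj strictMono_id).mp (by simp)))

theorem perm_induction_on_ascents {P : Equiv.Perm (Fin (n + 1)) → Prop} (one : P 1)
    (mul_adj : ∀ w (i : Fin n), w i.castSucc < w i.succ → P w → P (w * adj i))
    (w : Equiv.Perm (Fin (n + 1))) : P w := by
  induction hl : permLength w using Nat.strong_induction_on generalizing w with
  | _ l ih =>
    obtain rfl | hw := eq_or_ne w 1
    · exact one
    obtain ⟨i, hi⟩ := exists_descent hw
    have hlt : permLength (w * adj i) < l := by
      have := permLength_mul_adj_of_gt w hi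
      omega
    simpa only [mul_adj_adj] using
      mul_adj (w * adj i) i (by simpa [adj] using hi) (ih _ hlt _ rfl)

theorem omegaPerm_apply (N : ℕ) (i : Fin N) : omegaPerm N i = i.rev := rfl

theorem omegaPerm_mul_self (N : ℕ) : omegaPerm N * omegaPerm N = 1 := by
  ext i
  simp [omegaPerm_apply]

theorem omegaPerm_mul_omegaPerm_mul {N : ℕ} (w : Equiv.Perm (Fin N)) :
    omegaPerm N * (omegaPerm N * w) = w := by
  rw [← mul_assoc, omegaPerm_mul_self, one_mul]

theorem omegaPerm_mul_apply_lt {N : ℕ} {w : Equiv.Perm (Fin N)} {i j : Fin N} :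
    (omegaPerm N * w) i < (omegaPerm N * w) j ↔ w j < w i :=
  Fin.rev_lt_rev

theorem perm_induction_on_descents {P : Equiv.Perm (Fin (n + 1)) → Prop}
    (omega : P (omegaPerm (n + 1)))
    (mul_adj : ∀ w (i : Fin n), w i.succ < w i.castSucc → P w → P (w * adj i))
    (w : Equiv.Perm (Fin (n + 1))) : P w := by
  rw [← omegaPerm_mul_omegaPerm_mul w]
  induction omegaPerm (n + 1) * w using perm_induction_on_ascents with
  | one => simpa using omega
  | mul_adj v i hi hv =>
    rw [← mul_assoc]
    exact mul_adj _ i (omegaPerm_mul_apply_lt.mpr hi) hv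

theorem exists_ascent {w : Equiv.Perm (Fin (n + 1))} (hw : w ≠ omegaPerm (n + 1)) :
    ∃ i : Fin n, w i.castSucc < w i.succ := by
  have hne : omegaPerm (n + 1) * w ≠ 1 := fun h => hw <| by
    rw [← omegaPerm_mul_omegaPerm_mul w, h, mul_one]
  exact (exists_descent hne).imp fun i => omegaPerm_mul_apply_lt.mp

theorem permLength_le_omegaPerm (w : Equiv.Perm (Fin (n + 1))) :
    permLength w ≤ permLength (omegaPerm (n + 1)) := by
  induction w using perm_induction_on_descents with
  | omega => exact le_rfl
  | mul_adj w i hi ih =>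
    have := permLength_mul_adj_of_gt w hi
    omega

theorem permLength_lt_omegaPerm {w : Equiv.Perm (Fin (n + 1))} (hw : w ≠ omegaPerm (n + 1)) :
    permLength w < permLength (omegaPerm (n + 1)) := by
  obtain ⟨i, hi⟩ := exists_ascent hw
  have hle := permLength_le_omegaPerm (w * adj i)
  rw [permLength_mul_adj_of_lt w hi] at hle
  exact hle

theorem exists_add_lt_of_ne_omegaPerm {w : Equiv.Perm (Fin (n + 1))}
    (hw : w ≠ omegaPerm (n + 1)) : ∃ i, (w i : ℕ) + i < n := by
  by_contra! h
  have hsum : ∑ i, ((w i : ℕ) + i) = ∑ _i : Fin (n + 1), n := by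
    calc ∑ i, ((w i : ℕ) + i) = ∑ i : Fin (n + 1), ((omegaPerm (n + 1) i : ℕ) + i) := by
          simp only [Finset.sum_add_distrib, Equiv.sum_comp _ fun i : Fin (n + 1) => (i : ℕ)]
      _ = ∑ _i : Fin (n + 1), n := Finset.sum_congr rfl fun i _ => by
          rw [omegaPerm_apply, Fin.val_rev]; omega
  have heq := (Finset.sum_eq_sum_iff_of_le fun i _ => h i).mp hsum.symm
  refine hw (Equiv.ext fun i => Fin.ext ?_)
  rw [omegaPerm_apply, Fin.val_rev]
  have := heq i (Finset.mem_univ i)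
  omega

end Permutations

section FlagStateAtSites

variable [Field F] {K N : ℕ} {β : F}

theorem om_ne_zero {a b : F} (hab : a ≠ b) (hb : 1 + β * b ≠ 0) : om β a b ≠ 0 :=
  div_ne_zero (sub_ne_zero.mpr hab) hb

theorem flagState_comp_adj_apply (u : Fin K → F) {t : Fin (N + 1) → F}
    (ht : ∀ j, 1 + β * t j ≠ 0) {s : Fin (N + 1) → Fin (K + 1)} {j : Fin N}
    (hs : s j.castSucc < s j.succ) :
    flagState β u (t ∘ adj j) s =
      (1 + β * om β (t j.castSucc) (t j.succ)) * flagState β u t s +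
        om β (t j.castSucc) (t j.succ) * flagState β u t (s ∘ adj j) := by
  rw [flagState, ← rCheck_nest β u ht, rCheck_apply, if_pos hs, ← flagState]

theorem flagState_castSucc_comp_perm_apply_eq_zero {x : Fin (K + 1) → F}
    (hx : Function.Injective x) (hβ : ∀ i, 1 + β * x i ≠ 0) (s v : Equiv.Perm (Fin (K + 1)))
    (hlen : permLength v + permLength s < permLength (omegaPerm (K + 1))) :
    flagState β (x ∘ Fin.castSucc) (x ∘ v) s = 0 := by
  induction s using perm_induction_on_ascents generalizing v with
  | one =>
    have hv : v ≠ omegaPerm (K + 1) := by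
      rintro rfl
      omega
    obtain ⟨i, hi⟩ := exists_add_lt_of_ne_omegaPerm hv
    refine (flagState_id β _ _).trans ?_
    refine Finset.prod_eq_zero (Finset.mem_univ (⟨v i, by omega⟩ : Fin K)) ?_
    refine Finset.prod_eq_zero (Finset.mem_univ i) ?_
    rw [if_pos (by rwa [add_comm])]
    simp [om]
  | mul_adj s j hj ih =>
    rw [permLength_mul_adj_of_lt s hj] at hlen
    have hvj := permLength_mul_adj_le v j
    have hrec := flagState_comp_adj_apply (x ∘ Fin.castSucc) (t := x ∘ v) (fun i => hβ _) hj
    have hzero : flagState β (x ∘ Fin.castSucc) ((x ∘ v) ∘ adj j) s = 0 :=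
      ih (v * adj j) (by omega)
    rw [hzero, ih v (by omega), mul_zero, zero_add] at hrec
    have hne : x (v j.castSucc) ≠ x (v j.succ) :=
      (hx.comp v.injective).ne Fin.castSucc_lt_succ.ne
    exact (mul_eq_zero.mp hrec.symm).resolve_left (om_ne_zero hne (hβ _))

theorem flagState_castSucc {x : Fin (K + 1) → F} (hx : Function.Injective x)
    (hβ : ∀ i, 1 + β * x i ≠ 0) :
    flagState β (x ∘ Fin.castSucc) x = ket (K + 1) (K + 1) (omegaPerm (K + 1)) := by
  funext s
  rw [ket]
  split_ifs with hs
  · rw [hs, flagState_omegaPerm]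
  · by_contra hne
    obtain ⟨p, rfl⟩ : ∃ p : Equiv.Perm (Fin (K + 1)), p = s :=
      ⟨.ofBijective s (bijective_of_flagState_ne_zero hne), rfl⟩
    refine hne (flagState_castSucc_comp_perm_apply_eq_zero hx hβ p 1 ?_)
    rw [permLength_one, zero_add]
    exact permLength_lt_omegaPerm fun hp => hs (by rw [hp])

/-- The exchange relations move a permutation of the parameters `x` from the sites of the inner
state to the auxiliary lines of the outer one, so it suffices to treat the identity. -/
theorem nest_comp_perm_flagState {x : Fin (K + 1) → F} (hx : Function.Injective x)
    (hβ : ∀ i, 1 + β * x i ≠ 0) {t : Fin N → F} (ht : ∀ i, 1 + β * t i ≠ 0)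
    (e : Equiv.Perm (Fin (K + 1))) :
    nest β (x ∘ e) t (flagState β (x ∘ Fin.castSucc) (x ∘ e)) = flagState β x t := by
  induction e using perm_induction_on_ascents with
  | one => rw [Equiv.Perm.coe_one, Function.comp_id, flagState_castSucc hx hβ, flagState]
  | mul_adj e j _ ih =>
    rw [← ih, Equiv.Perm.coe_mul, ← Function.comp_assoc, flagState,
      ← rCheck_nest β _ (t := x ∘ e) (fun i => hβ _), ← flagState]
    exact nest_comp_adj_rCheck β (fun i => hβ _) ht _ j

theorem nest_flagState_of_equiv {n : ℕ} {x : Fin n → F} (hx : Function.Injective x)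
    (hβ : ∀ i, 1 + β * x i ≠ 0) {t : Fin N → F} (ht : ∀ i, 1 + β * t i ≠ 0)
    (hn : n = K + 1) (e : Equiv.Perm (Fin n)) :
    nest β (x ∘ e) t (flagState β (fun a : Fin K => x ⟨a, by omega⟩) (x ∘ e)) =
      flagState β (fun a => x (Fin.cast hn.symm a)) t := by
  subst hn
  exact nest_comp_perm_flagState hx hβ ht e

open scoped Matrix in
theorem flagState_of_eq_one {n : ℕ} (u : Fin n → F) (t : Fin N → F) (hn : 1 = n) :
    flagState β (fun a : Fin 1 => u (Fin.cast hn a)) t =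
      (List.ofFn fun a => blockOp 2 N β (u a) t 0 1).prod *ᵥ ket 2 N fun _ => 0 := by
  subst hn
  funext s
  rw [flagState, nest, Fintype.sum_unique, ket, if_pos (Subsingleton.elim _ _), one_mul]
  rfl

theorem psi_eq_flagState {M : ℕ} {x : Fin (M + 1) → F} {σ : (l : ℕ) → Fin (M + 2 - l) → F}
    (hx : Function.Injective x) (hβ : ∀ i, 1 + β * x i ≠ 0) (ht : ∀ i, 1 + β * σ 0 i ≠ 0)
    (hperm : ∀ l (_ : 1 ≤ l) (_ : l ≤ M + 1), ∃ e : Equiv.Perm (Fin (M + 2 - l)), ∀ a,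
      σ l a = x ⟨e a, by omega⟩) (j m : ℕ) (hjm : j + m = M) :
    psi β (fun l => M + 2 - l) σ j m =
      flagState β (fun a : Fin (j + 1) => x ⟨a, by omega⟩) (σ m) := by
  have hσ : ∀ i, 1 + β * σ m i ≠ 0 := by
    obtain rfl | hm := m.eq_zero_or_pos
    · exact ht
    · obtain ⟨e, he⟩ := hperm m hm (by omega)
      exact fun i => he i ▸ hβ _
  obtain ⟨e, he⟩ := hperm (m + 1) (by omega) (by omega)
  induction j generalizing m with
  | zero =>
    have hsites : 1 = M + 2 - (m + 1) := by omega
    have hσx (a : Fin 1) : x ⟨a, by omega⟩ = σ (m + 1) (Fin.cast hsites a) := by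
      have hlt : (e (Fin.cast hsites a) : ℕ) < M + 2 - (m + 1) := (e _).isLt
      rw [he]
      congr 2
      omega
    simp only [hσx]
    exact (flagState_of_eq_one _ _ hsites).symm
  | succ j ih =>
    have hnest : psi β (fun l => M + 2 - l) σ (j + 1) m =
        nest β (σ (m + 1)) (σ m) (psi β (fun l => M + 2 - l) σ j (m + 1)) := rfl
    obtain ⟨e', he'⟩ := hperm (m + 2) (by omega) (by omega)
    have hσx : σ (m + 1) = (fun a : Fin (M + 2 - (m + 1)) => x ⟨a, by omega⟩) ∘ e := funext he
    rw [hnest, ih (m + 1) (by omega) (fun i => he i ▸ hβ _) e' he', hσx]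
    exact nest_flagState_of_equiv (fun a b h => Fin.ext (Fin.mk.inj (hx h))) (fun _ => hβ _) hσ
      (by omega) e

end FlagStateAtSites

section Groth

variable [Field F] {n : ℕ} {β : F}
  {G : Equiv.Perm (Fin (n + 1)) → (Fin (n + 1) → F) → (Fin (n + 1) → F) → F}

theorem groth_mul_adj (hG : IsGroth n β G) {w : Equiv.Perm (Fin (n + 1))} {i : Fin n}
    (hw : w i.succ < w i.castSucc) {x : Fin (n + 1) → F} (hx : Function.Injective x)
    (y : Fin (n + 1) → F) :
    G (w * adj i) x y =
      ((1 + β * x i.succ) * G w x y - (1 + β * x i.castSucc) * G w (x ∘ adj i) y) /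
        (x i.castSucc - x i.succ) :=
  hG.2 w i x y (permLength_mul_adj_of_gt w hw) (hx.ne Fin.castSucc_lt_succ.ne)

theorem groth_congr_of_castSucc (hG : IsGroth n β G) {y y' : Fin (n + 1) → F}
    (hy : ∀ i : Fin n, y i.castSucc = y' i.castSucc) (w : Equiv.Perm (Fin (n + 1)))
    {x : Fin (n + 1) → F} (hx : Function.Injective x) : G w x y = G w x y' := by
  induction w using perm_induction_on_descents generalizing x with
  | omega =>
    rw [hG.1, hG.1]
    refine Finset.prod_congr rfl fun p hp => ?_
    have hp2 : y p.2 = y' p.2 := hy ⟨p.2, by grind⟩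
    rw [hp2]
  | mul_adj w i hi ih =>
    rw [groth_mul_adj hG hi hx, groth_mul_adj hG hi hx, ih hx,
      ih (hx.comp (adj i).injective)]

theorem adj_mul_omegaPerm (j : Fin n) :
    adj j * omegaPerm (n + 1) = omegaPerm (n + 1) * adj j.rev := by
  rw [adj, adj, Equiv.mul_swap_eq_swap_mul, omegaPerm_apply, omegaPerm_apply, Fin.rev_castSucc,
    Fin.rev_succ, Fin.rev_rev, Equiv.swap_comm]

/-- The cells of the staircase shape with `n` rows, other than the outer corner in column `j`. -/
def staircaseErase (j : Fin n) : Finset (Fin (n + 1) × Fin (n + 1)) :=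
  ({p | (p.1 : ℕ) + p.2 + 2 ≤ n + 1} : Finset _).erase (j.rev.castSucc, j.castSucc)

theorem mem_staircaseErase {j : Fin n} {p : Fin (n + 1) × Fin (n + 1)} :
    p ∈ staircaseErase j ↔ (p.1 : ℕ) + p.2 + 1 ≤ n ∧ ((p.2 : ℕ) = j → (p.1 : ℕ) + p.2 + 1 ≠ n) := by
  have hrev := j.val_rev
  simp only [staircaseErase, Finset.mem_erase, Finset.mem_filter, Finset.mem_univ, true_and, ne_eq,
    Prod.ext_iff, Fin.ext_iff, Fin.val_castSucc]
  omega

theorem mem_staircaseErase_iff_adj_left (j : Fin n) (p : Fin (n + 1) × Fin (n + 1)) :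
    p ∈ staircaseErase j ↔ (adj j.rev p.1, p.2) ∈ staircaseErase j := by
  grind [mem_staircaseErase]

theorem mem_staircaseErase_iff_adj_right (j : Fin n) (p : Fin (n + 1) × Fin (n + 1)) :
    p ∈ staircaseErase j ↔ (p.1, adj j p.2) ∈ staircaseErase j := by
  grind [mem_staircaseErase]

/-- The top Grothendieck polynomial with its factor at the corner in column `j` removed; it is
symmetric in the two `x`-variables and in the two `y`-variables meeting at that corner. -/
def staircaseProd (β : F) (j : Fin n) (x y : Fin (n + 1) → F) : F :=
  ∏ p ∈ staircaseErase j, (x p.1 + y p.2 + β * x p.1 * y p.2)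

theorem groth_omegaPerm (hG : IsGroth n β G) (j : Fin n) (x y : Fin (n + 1) → F) :
    G (omegaPerm (n + 1)) x y =
      (x j.rev.castSucc + y j.castSucc + β * x j.rev.castSucc * y j.castSucc) *
        staircaseProd β j x y := by
  rw [hG.1]
  have hmem : (j.rev.castSucc, j.castSucc) ∈
      ({p | (p.1 : ℕ) + p.2 + 2 ≤ n + 1} : Finset (Fin (n + 1) × Fin (n + 1))) := by
    grind
  exact (Finset.mul_prod_erase _
    (fun p : Fin (n + 1) × Fin (n + 1) => x p.1 + y p.2 + β * x p.1 * y p.2) hmem).symm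

theorem staircaseProd_comp_adj_left (j : Fin n) (x y : Fin (n + 1) → F) :
    staircaseProd β j (x ∘ adj j.rev) y = staircaseProd β j x y :=
  Finset.prod_equiv ((adj j.rev).prodCongr (Equiv.refl _))
    (fun p => mem_staircaseErase_iff_adj_left j p) fun _ _ => rfl

theorem staircaseProd_comp_adj_right (j : Fin n) (x y : Fin (n + 1) → F) :
    staircaseProd β j x (y ∘ adj j) = staircaseProd β j x y :=
  Finset.prod_equiv ((Equiv.refl _).prodCongr (adj j))
    (fun p => mem_staircaseErase_iff_adj_right j p) fun _ _ => rfl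

theorem inv_descent_of_mul_adj {w : Equiv.Perm (Fin (n + 1))} {i j : Fin n}
    (hi : w i.succ < w i.castSucc)
    (hj : (w * adj i)⁻¹ j.succ < (w * adj i)⁻¹ j.castSucc) : w⁻¹ j.succ < w⁻¹ j.castSucc := by
  rw [mul_inv_rev, Equiv.swap_inv, Equiv.Perm.mul_apply, Equiv.Perm.mul_apply] at hj
  have hsucc : w (w⁻¹ j.succ) = j.succ := w.apply_symm_apply _
  have hcastSucc : w (w⁻¹ j.castSucc) = j.castSucc := w.apply_symm_apply _
  grind

theorem adj_mul_descent {w : Equiv.Perm (Fin (n + 1))} {i j : Fin n}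
    (hi : w i.succ < w i.castSucc)
    (hj : (w * adj i)⁻¹ j.succ < (w * adj i)⁻¹ j.castSucc) :
    (adj j * w) i.succ < (adj j * w) i.castSucc := by
  rw [mul_inv_rev, Equiv.swap_inv, Equiv.Perm.mul_apply, Equiv.Perm.mul_apply] at hj
  have hsucc : w⁻¹ (w i.succ) = i.succ := w.symm_apply_apply _
  have hcastSucc : w⁻¹ (w i.castSucc) = i.castSucc := w.symm_apply_apply _
  exact adj_apply_lt_adj_apply hi (by grind)

theorem groth_adj_mul (hG : IsGroth n β G) {w : Equiv.Perm (Fin (n + 1))} {j : Fin n}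
    (hw : w⁻¹ j.succ < w⁻¹ j.castSucc) {x y : Fin (n + 1) → F} (hx : Function.Injective x)
    (hy : Function.Injective y) :
    G (adj j * w) x y =
      ((1 + β * y j.succ) * G w x y - (1 + β * y j.castSucc) * G w x (y ∘ adj j)) /
        (y j.castSucc - y j.succ) := by
  induction w using perm_induction_on_descents generalizing x with
  | omega =>
    have hdesc : omegaPerm (n + 1) j.rev.succ < omegaPerm (n + 1) j.rev.castSucc :=
      Fin.rev_lt_rev.mpr Fin.castSucc_lt_succ
    rw [adj_mul_omegaPerm, groth_mul_adj hG hdesc hx,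
      div_eq_div_iff (sub_ne_zero.mpr (hx.ne Fin.castSucc_lt_succ.ne))
        (sub_ne_zero.mpr (hy.ne Fin.castSucc_lt_succ.ne))]
    simp only [groth_omegaPerm hG j, staircaseProd_comp_adj_left, staircaseProd_comp_adj_right,
      Function.comp_apply, Equiv.swap_apply_left]
    ring
  | mul_adj w i hi ih =>
    have hw' := inv_descent_of_mul_adj hi hw
    rw [← mul_assoc, groth_mul_adj hG (adj_mul_descent hi hw) hx, ih hw' hx,
      ih hw' (hx.comp (adj i).injective), groth_mul_adj hG hi hx, groth_mul_adj hG hi hx]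
    ring

theorem add_negOm_add_mul {a b : F} (hb : 1 + β * b ≠ 0) :
    a + negOm β b + β * a * negOm β b = om β a b := by
  rw [negOm, om, eq_div_iff hb]
  linear_combination (1 + β * a) * div_mul_cancel₀ (-b) hb

theorem negOm_comp_injective {t : Fin n → F} (ht : Function.Injective t)
    (hβ : ∀ i, 1 + β * t i ≠ 0) : Function.Injective (negOm β ∘ t) := by
  intro a b hab
  have hcross := (div_eq_div_iff (hβ a) (hβ b)).mp hab
  exact ht (by linear_combination -hcross)

theorem groth_omegaPerm_negOm (hG : IsGroth n β G) (x : Fin (n + 1) → F) {t : Fin (n + 1) → F}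
    (hβ : ∀ i, 1 + β * t i ≠ 0) :
    G (omegaPerm (n + 1)) x (negOm β ∘ t) = flagState β (x ∘ Fin.castSucc) t id := by
  rw [hG.1, flagState_id, Finset.prod_filter, Fintype.prod_prod_type, Fin.prod_univ_castSucc]
  have hlast : ∀ j : Fin (n + 1), ¬ ((Fin.last n : ℕ) + j + 2 ≤ n + 1) := by simp
  have hcell (a : Fin n) (j : Fin (n + 1)) :
      (a.castSucc : ℕ) + j + 2 ≤ n + 1 ↔ (j : ℕ) + a < n := by
    rw [Fin.val_castSucc]
    omega
  simp only [hlast, if_false, Finset.prod_const_one, mul_one, hcell, Function.comp_apply,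
    add_negOm_add_mul (hβ _)]

theorem groth_inv_mul_omegaPerm (hG : IsGroth n β G) {x t : Fin (n + 1) → F}
    (hx : Function.Injective x) (ht : Function.Injective t) (hβ : ∀ i, 1 + β * t i ≠ 0)
    (p : Equiv.Perm (Fin (n + 1))) :
    G (p⁻¹ * omegaPerm (n + 1)) x (negOm β ∘ t) = flagState β (x ∘ Fin.castSucc) t p := by
  induction p using perm_induction_on_ascents generalizing t with
  | one => simpa using groth_omegaPerm_negOm hG x hβ
  | mul_adj p j hj ih =>
    have hneg := negOm_comp_injective ht hβ
    have hdesc : (p⁻¹ * omegaPerm (n + 1))⁻¹ j.succ < (p⁻¹ * omegaPerm (n + 1))⁻¹ j.castSucc := by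
      rw [mul_inv_rev, inv_inv]
      exact Fin.rev_lt_rev.mpr hj
    have hrec := flagState_comp_adj_apply (x ∘ Fin.castSucc) hβ hj
    rw [mul_inv_rev, Equiv.swap_inv, mul_assoc, groth_adj_mul hG hdesc hx hneg,
      Function.comp_assoc, ih ht hβ, ih (ht.comp (adj j).injective) (fun i => hβ _), hrec,
      div_eq_iff (sub_ne_zero.mpr (hneg.ne Fin.castSucc_lt_succ.ne)), Equiv.Perm.coe_mul]
    have h1 := hβ j.castSucc
    have h2 := hβ j.succ
    simp only [Function.comp_apply, negOm, om]
    field_simp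
    ring

end Groth

section Expansion

theorem eq_sum_perm_smul_ket [Field F] {N : ℕ} {φ : (Fin N → Fin N) → F}
    (hφ : ∀ s, φ s ≠ 0 → Function.Bijective s) :
    φ = ∑ p : Equiv.Perm (Fin N), φ p • ket N N p := by
  funext s
  simp only [Finset.sum_apply, Pi.smul_apply, ket, smul_eq_mul, mul_ite, mul_one, mul_zero]
  by_cases hs : Function.Bijective s
  · rw [Finset.sum_eq_single (.ofBijective s hs)]
    · simp
    · exact fun p _ hp => if_neg fun h => hp (Equiv.ext fun i => (congrFun h i).symm)
    · simp
  · have hne (p : Equiv.Perm (Fin N)) : s ≠ p := fun h => hs (h ▸ p.bijective)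
    simp only [hne, if_false, Finset.sum_const_zero]
    exact not_not.mp (mt (hφ s) hs)

theorem flagState_eq_sum_groth [Field F] {n : ℕ} {β : F}
    {G : Equiv.Perm (Fin (n + 1)) → (Fin (n + 1) → F) → (Fin (n + 1) → F) → F}
    (hG : IsGroth n β G) {x t : Fin (n + 1) → F} (hx : Function.Injective x)
    (ht : Function.Injective t) (hβ : ∀ i, 1 + β * t i ≠ 0) :
    flagState β (x ∘ Fin.castSucc) t =
      ∑ w : Equiv.Perm (Fin (n + 1)), G w x (negOm β ∘ t) •
        ket (n + 1) (n + 1) fun j => omegaPerm (n + 1) (w⁻¹ j) := by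
  rw [eq_sum_perm_smul_ket (φ := flagState β (x ∘ Fin.castSucc) t)
      fun _ hs => bijective_of_flagState_ne_zero hs,
    ← ((Equiv.inv _).trans (Equiv.mulLeft (omegaPerm (n + 1)))).sum_comp]
  refine Finset.sum_congr rfl fun w _ => ?_
  have hw := groth_inv_mul_omegaPerm hG hx ht hβ (omegaPerm (n + 1) * w⁻¹)
  rw [mul_inv_rev, inv_inv, inv_mul_cancel_right] at hw
  rw [hw]
  rfl

theorem one_add_mul_ne_zero_of_algebraicIndependent {R A ι : Type*} [CommRing R] [Nontrivial R]
    [CommRing A] [Algebra R A] {v : ι → A} (hv : AlgebraicIndependent R v) (i j : ι) :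
    1 + v i * v j ≠ 0 := by
  intro h
  have hzero : (1 + MvPolynomial.X i * MvPolynomial.X j : MvPolynomial ι R) = 0 :=
    algebraicIndependent_iff.mp hv _ (by simpa using h)
  simpa using congrArg MvPolynomial.constantCoeff hzero

end Expansion

end NestedBethe

open NestedBethe in
theorem bethe_state_groth_expansion_general [Field F] {M : ℕ} {β : F}
    {x y : Fin (M + 2) → F} {σ : (l : ℕ) → Fin (M + 2 - l) → F}
    (hx : Function.Injective x) (ht : Function.Injective (σ 0))
    (hxβ : ∀ i : Fin (M + 1), 1 + β * x i.castSucc ≠ 0) (htβ : ∀ i, 1 + β * σ 0 i ≠ 0)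
    (hy : ∀ i : Fin (M + 1), y i.castSucc = negOm β (σ 0 i.castSucc))
    (hperm : ∀ l (_ : 1 ≤ l) (_ : l ≤ M + 1), ∃ e : Equiv.Perm (Fin (M + 2 - l)), ∀ a,
      σ l a = x ⟨e a, by omega⟩)
    {G : Equiv.Perm (Fin (M + 2)) → (Fin (M + 2) → F) → (Fin (M + 2) → F) → F}
    (hG : IsGroth (M + 1) β G) :
    psi β (fun l => M + 2 - l) σ M 0 =
      ∑ w : Equiv.Perm (Fin (M + 2)),
        G w x y • ket (M + 2) (M + 2) fun j => omegaPerm (M + 2) (w⁻¹ j) := by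
  have hpsi : psi β (fun l => M + 2 - l) σ M 0 = flagState β (x ∘ Fin.castSucc) (σ 0) :=
    psi_eq_flagState (x := x ∘ Fin.castSucc) (hx.comp (Fin.castSucc_injective _)) hxβ htβ hperm
      M 0 rfl
  rw [hpsi, flagState_eq_sum_groth hG hx ht htβ]
  exact Finset.sum_congr rfl fun w _ => by
    rw [groth_congr_of_castSucc hG (y' := y) (fun i => (hy i).symm) w hx]

/-- **Theorem `thm2`** (complete flag case, `n = N = M+2`, `k_m = N-m`, `σ^{(0)} = t`):
if for each `i = 1,…,N-1` the tuple `(σ^{(i)}_1,…,σ^{(i)}_{N-i})` is a permutation of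
`(x_1,…,x_{N-i})`, then the nested Bethe ansatz state satisfies
`|ψ^{(0)}⟩ = ∑_{w ∈ S_N} G^β_w(x_1,…,x_{N-1}; ⊖t_1,…,⊖t_{N-1}) |ω_N w⁻¹⟩`. -/
theorem bethe_state_groth_expansion [Field F] [CharZero F] (M : ℕ) (β : F)
    (x : Fin (M + 1) → F) (σ : (l : ℕ) → Fin (M + 2 - l) → F)
    (hind : AlgebraicIndependent ℚ
      (Sum.elim (fun _ : Unit => β) (Sum.elim x (σ 0))))
    (hperm : ∀ l, ∀ _hl1 : 1 ≤ l, ∀ _hl2 : l ≤ M + 1,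
      ∃ e : Equiv.Perm (Fin (M + 2 - l)), ∀ a,
        σ l a = x ⟨(e a : ℕ), by have := (e a).isLt; omega⟩)
    (G : Equiv.Perm (Fin (M + 2)) → (Fin (M + 2) → F) → (Fin (M + 2) → F) → F)
    (hG : IsGroth (M + 1) β G) :
    psi β (fun l => M + 2 - l) σ M 0 =
      ∑ w : Equiv.Perm (Fin (M + 2)),
        G w (Fin.snoc x 0)
            (Fin.snoc (fun i : Fin (M + 1) => negOm β (σ 0 i.castSucc)) 0) •
          ket (M + 2) (M + 2) fun j => omegaPerm (M + 2) (w⁻¹ j) := by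
  have hne := NestedBethe.one_add_mul_ne_zero_of_algebraicIndependent hind (.inl ())
  have hx : Function.Injective x := hind.injective.comp (Sum.inr_injective.comp Sum.inl_injective)
  have ht : Function.Injective (σ 0) :=
    hind.injective.comp (Sum.inr_injective.comp Sum.inr_injective)
  have hx0 : (0 : F) ∉ Set.range x := fun ⟨i, hi⟩ => hind.ne_zero (.inr (.inl i)) hi
  exact bethe_state_groth_expansion_general (Fin.snoc_injective_of_injective hx hx0) ht
    (fun i => by simpa using hne (.inr (.inl i))) (fun i => hne (.inr (.inr i)))
    (fun i => by simp)
    (fun l hl1 hl2 => (hperm l hl1 hl2).imp fun e he a =>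
      (he a).trans (Fin.snoc_castSucc (α := fun _ => F) 0 x _).symm) hG
end
end
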